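/- Fix ν ≥ 2, positive integers s,t, and f_{i,j} ∈ L¹([-π,π]; ℂ^{s×t}) for i,j = 1,…,ν. Let A_n be the ν×ν block matrix with (i,j) block T_{n_i,n_j}(f_{i,j}), where n = n_1+⋯+n_ν, n_i/n → c_i ∈ (0,1), c_1+⋯+c_ν = 1, and each c_j is rational: c_j = m_j/m with m_j, m positive integers and m a common denominator (so m_1+⋯+m_ν = m). Define, for j,k = 1,…,ν, the matrix-valued functions E_{j,k} : [-π,π] → ℂ^{sm_j×tm_k} by: E_{j,j} = I_{m_j} ⊗ f_{j,j}; for j ≠ k with m_k ≥ m_j, E_{j,k} = [I_{m_j} ⊗ f_{j,k} | O_{sm_j×t(m_k−m_j)}]; for j ≠ k with m_j ≥ m_k, E_{j,k} = [I_{m_k} ⊗ f_{j,k}; O_{s(m_j−m_k)×tm_k}]. Set F = (E_{j,k})_{j,k=1}^ν : [-π,π] → ℂ^{sm×tm}. Then {A_n}_n ∼_σ F, and if in addition every A_n is Hermitian then {A_n}_n ∼_λ F. -/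

import Mathlib

open MeasureTheory Filter Topology Matrix
open scoped Real

noncomputable section

/-- Sum of `F` over the eigenvalues (with multiplicity) of a square complex matrix,
the eigenvalues being the roots of the characteristic polynomial. -/
def eigSum {ι : Type*} [Fintype ι] [DecidableEq ι] (F : ℂ → ℂ) (A : Matrix ι ι ℂ) : ℂ :=
  (A.charpoly.roots.map F).sum

/-- Sum of `F` over the singular values `σ_1, …, σ_{min(#rows,#cols)}` of a rectangular
complex matrix: the singular values are the square roots of the eigenvalues of `A * Aᴴ`,
discarding the `#rows - min(#rows,#cols)` superfluous zero ones. -/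
def svSum {m n : Type*} [Fintype m] [Fintype n] [DecidableEq m]
    (F : ℝ → ℂ) (A : Matrix m n ℂ) : ℂ :=
  (∑ i, F (Real.sqrt ((Matrix.isHermitian_mul_conjTranspose_self A).eigenvalues i))) -
    ((Fintype.card m - min (Fintype.card m) (Fintype.card n) : ℕ) : ℂ) * F 0

/-- `{A_n}_n ∼_σ f` : the matrix-sequence `A` is distributed as the matrix-valued
symbol `f : Ω → ℂ^{ρ×τ}` in the sense of the singular values (Weyl sense). -/
def DistributedSV {Θ : Type*} [MeasureSpace Θ] (Ω : Set Θ)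
    {ρ τ : Type*} [Fintype ρ] [Fintype τ] [DecidableEq ρ]
    (f : Θ → Matrix ρ τ ℂ)
    {ι κ : ℕ → Type} [∀ n, Fintype (ι n)] [∀ n, Fintype (κ n)] [∀ n, DecidableEq (ι n)]
    (A : ∀ n, Matrix (ι n) (κ n) ℂ) : Prop :=
  ∀ F : ℝ → ℂ, Continuous F → HasCompactSupport F →
    Tendsto
      (fun n => ((min (Fintype.card (ι n)) (Fintype.card (κ n)) : ℕ) : ℂ)⁻¹ * svSum F (A n))
      atTop
      (𝓝 (((volume Ω).toReal : ℂ)⁻¹ *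
        ∫ θ in Ω, ((min (Fintype.card ρ) (Fintype.card τ) : ℕ) : ℂ)⁻¹ * svSum F (f θ)))

/-- `{A_n}_n ∼_λ f` : the matrix-sequence `A` is distributed as the matrix-valued
symbol `f : Ω → ℂ^{ρ×ρ}` in the sense of the eigenvalues (Weyl sense). -/
def DistributedEig {Θ : Type*} [MeasureSpace Θ] (Ω : Set Θ)
    {ρ : Type*} [Fintype ρ] [DecidableEq ρ]
    (f : Θ → Matrix ρ ρ ℂ)
    {ι : ℕ → Type} [∀ n, Fintype (ι n)] [∀ n, DecidableEq (ι n)]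
    (A : ∀ n, Matrix (ι n) (ι n) ℂ) : Prop :=
  ∀ F : ℂ → ℂ, Continuous F → HasCompactSupport F →
    Tendsto (fun n => ((Fintype.card (ι n) : ℕ) : ℂ)⁻¹ * eigSum F (A n)) atTop
      (𝓝 (((volume Ω).toReal : ℂ)⁻¹ *
        ∫ θ in Ω, ((Fintype.card ρ : ℕ) : ℂ)⁻¹ * eigSum F (f θ)))

/-- `{A_n}_n ∼_σ α I` (constant symbol `α I_s`, `α = 0` being the notion of a
zero-distributed matrix-sequence): the limit of the singular value averages is `F(α)`. -/
def DistributedSVConst (α : ℝ)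
    {ι κ : ℕ → Type} [∀ n, Fintype (ι n)] [∀ n, Fintype (κ n)] [∀ n, DecidableEq (ι n)]
    (A : ∀ n, Matrix (ι n) (κ n) ℂ) : Prop :=
  ∀ F : ℝ → ℂ, Continuous F → HasCompactSupport F →
    Tendsto
      (fun n => ((min (Fintype.card (ι n)) (Fintype.card (κ n)) : ℕ) : ℂ)⁻¹ * svSum F (A n))
      atTop (𝓝 (F α))

/-- `{A_n}_n ∼_λ α I` (constant symbol `α I_s`, `α` real): the limit of the eigenvalue
averages is `F(α)`. -/
def DistributedEigConst (α : ℝ)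
    {ι : ℕ → Type} [∀ n, Fintype (ι n)] [∀ n, DecidableEq (ι n)]
    (A : ∀ n, Matrix (ι n) (ι n) ℂ) : Prop :=
  ∀ F : ℂ → ℂ, Continuous F → HasCompactSupport F →
    Tendsto (fun n => ((Fintype.card (ι n) : ℕ) : ℂ)⁻¹ * eigSum F (A n)) atTop
      (𝓝 (F (α : ℂ)))

/-- The `k`-th Fourier coefficient (computed entrywise) of a matrix-valued function on
`[-π, π]`: `f̂_k = (1/2π) ∫_{-π}^{π} f(θ) e^{-ικθ} dθ`. -/
def fCoeff {ρ τ : Type*} (f : ℝ → Matrix ρ τ ℂ) (k : ℤ) : Matrix ρ τ ℂ :=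
  Matrix.of fun a b =>
    ((2 * π : ℝ) : ℂ)⁻¹ *
      ∫ θ in (-π : ℝ)..π, f θ a b * Complex.exp (-(Complex.I * (k : ℂ) * (θ : ℂ)))

/-- The (rectangular) block Toeplitz matrix `T_{n,n'}(f) = [f̂_{i-j}]`, of size
`sn × tn'` when `f` is `s × t` matrix-valued. -/
def blockToeplitz {ρ τ : Type*} (f : ℝ → Matrix ρ τ ℂ) (n n' : ℕ) :
    Matrix (Fin n × ρ) (Fin n' × τ) ℂ :=
  Matrix.of fun p q => fCoeff f (((p.1 : ℕ) : ℤ) - ((q.1 : ℕ) : ℤ)) p.2 q.2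

/-- The `ν × ν` block matrix with `(i,j)` block the rectangular block Toeplitz matrix
`T_{n_i,n_j}(f_{i,j})`; the row index `⟨i,(k,a)⟩` consists of the block row `i`, the
Toeplitz row `k` and the intra-block row `a`. -/
def blockMat (ν s t : ℕ) (f : Fin ν → Fin ν → ℝ → Matrix (Fin s) (Fin t) ℂ)
    (ns : Fin ν → ℕ) :
    Matrix ((i : Fin ν) × (Fin (ns i) × Fin s)) ((j : Fin ν) × (Fin (ns j) × Fin t)) ℂ :=
  Matrix.of fun P Q =>
    fCoeff (f P.1 Q.1) (((P.2.1 : ℕ) : ℤ) - ((Q.2.1 : ℕ) : ℤ)) P.2.2 Q.2.2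

/-- Recasting of the column index of a `ν × ν` block matrix along an equality `s = t`,
realizing it as a square matrix. -/
def sigCast (ν s t : ℕ) (ns : Fin ν → ℕ) (hst : s = t) :
    ((j : Fin ν) × (Fin (ns j) × Fin s)) → ((j : Fin ν) × (Fin (ns j) × Fin t)) :=
  fun Q => ⟨Q.1, (Q.2.1, Fin.cast hst Q.2.2)⟩

/-- The `sm × tm` matrix-valued symbol `F = (E_{j,k})_{j,k=1}^ν` of Theorem
`th:general`: `E_{j,j} = I_{m_j} ⊗ f_{j,j}` and, for `j ≠ k`,
`E_{j,k} = I_{min{m_j,m_k}} ⊗ f_{j,k}` padded with zero columns (if `m_k ≥ m_j`) or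
zero rows (if `m_j ≥ m_k`); entrywise, the `((j,(p,a)),(k,(q,b)))` entry is
`f_{j,k} a b` if `p = q` and `0` otherwise. -/
def generalSymbol (ν s t : ℕ) (f : Fin ν → Fin ν → ℝ → Matrix (Fin s) (Fin t) ℂ)
    (mj : Fin ν → ℕ) :
    ℝ → Matrix ((j : Fin ν) × (Fin (mj j) × Fin s)) ((k : Fin ν) × (Fin (mj k) × Fin t)) ℂ :=
  fun θ => Matrix.of fun P Q =>
    if (P.2.1 : ℕ) = (Q.2.1 : ℕ) then f P.1 Q.1 θ P.2.2 Q.2.2 else 0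

/-!
The singular values of `A` are, up to sign and superfluous zeros, the eigenvalues of the Hermitian
dilation `[0, A; Aᴴ, 0]`. The dilation of `A_n` is, after a permutation, again a block matrix of
Toeplitz blocks, generated by the dilation of the symbol; so everything follows from the eigenvalue
statement for Hermitian symbols.

Averages of a test function over the eigenvalues of Hermitian matrices are stable under
perturbations of small trace norm: it suffices to see this for the resolvent, because functions
which are Lipschitz for the trace norm are dense by Stone–Weierstrass. Since Toeplitz matrices with
an `L¹`-small symbol have a trace norm that is small relative to their size, the symbol may be
assumed to be a trigonometric polynomial. Since the ratios of the block sizes tend to those of the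
integers `m_k`, the sizes may be replaced by `m_k N` with a common `N`, and cutting every block into
`m_k` segments of length `N` turns the matrix into Toeplitz blocks of size `N`. Those in the same
relative position within their blocks agree, up to boundedly many entries, with the circulants
generated by the symbol, and all others are negligible. The discrete Fourier transform diagonalizes
the circulants simultaneously, so that the eigenvalue average becomes a Riemann sum for the inflated
symbol.

If all `A_n` are Hermitian, the Fourier coefficients show that the symbol is Hermitian almost
everywhere, so the eigenvalue statement applies to it directly.
-/

section EigenvalueSums

variable {ι κ : Type*} [Fintype ι] [DecidableEq ι] [Fintype κ] [DecidableEq κ]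

lemma eigSum_eq_sum_eigenvalues (F : ℂ → ℂ) {A : Matrix ι ι ℂ} (hA : A.IsHermitian) :
    eigSum F A = ∑ i, F (hA.eigenvalues i) := by
  rw [eigSum, hA.roots_charpoly_eq_eigenvalues, Multiset.map_map]
  rfl

lemma eigSum_submatrix_equiv (F : ℂ → ℂ) (e : κ ≃ ι) (A : Matrix ι ι ℂ) :
    eigSum F (A.submatrix e e) = eigSum F A := by
  rw [eigSum, eigSum, ← charpoly_reindex e.symm A, reindex_apply, Equiv.symm_symm]

lemma eigSum_mul_comm (F : ℂ → ℂ) (A B : Matrix ι ι ℂ) :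
    eigSum F (A * B) = eigSum F (B * A) := by
  rw [eigSum, eigSum, charpoly_mul_comm]

lemma eigSum_zero (F : ℂ → ℂ) : eigSum F (0 : Matrix ι ι ℂ) = Fintype.card ι * F 0 := by
  simp [eigSum, charpoly_zero, Multiset.map_nsmul, Multiset.sum_nsmul]

lemma eigSum_diagonal (F : ℂ → ℂ) (d : ι → ℂ) : eigSum F (diagonal d) = ∑ i, F (d i) := by
  rw [eigSum, charpoly_diagonal,
    Polynomial.roots_prod _ _ (Finset.prod_ne_zero_iff.2 fun i _ => Polynomial.X_sub_C_ne_zero _)]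
  simp [-map_mul]

lemma eigSum_fromBlocks_diagonal (F : ℂ → ℂ) (A : Matrix ι ι ℂ) (B : Matrix κ κ ℂ) :
    eigSum F (fromBlocks A 0 0 B) = eigSum F A + eigSum F B := by
  rw [eigSum, charpoly_fromBlocks_zero₁₂,
    Polynomial.roots_mul (A.charpoly_monic.mul B.charpoly_monic).ne_zero, Multiset.map_add,
    Multiset.sum_add]
  rfl

lemma charmatrix_blockDiagonal (M : κ → Matrix ι ι ℂ) :
    (blockDiagonal M).charmatrix = blockDiagonal fun k => (M k).charmatrix := by
  ext ⟨i, k⟩ ⟨j, l⟩ : 1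
  by_cases hkl : k = l <;> by_cases hij : i = j <;>
    simp [blockDiagonal_apply, hkl, hij]

lemma eigSum_blockDiagonal (F : ℂ → ℂ) (M : κ → Matrix ι ι ℂ) :
    eigSum F (blockDiagonal M) = ∑ k, eigSum F (M k) := by
  have hdet : (blockDiagonal M).charpoly = ∏ k, (M k).charpoly := by
    rw [charpoly, charmatrix_blockDiagonal, det_blockDiagonal]
    rfl
  rw [eigSum, hdet,
    Polynomial.roots_prod _ _ (Finset.prod_ne_zero_iff.2 fun k _ => (M k).charpoly_monic.ne_zero),
    Multiset.map_bind, Multiset.sum_bind]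
  rfl

lemma eigSum_mul_comm_add (F : ℂ → ℂ) (A : Matrix ι κ ℂ) (B : Matrix κ ι ℂ) :
    eigSum F (A * B) + Fintype.card κ * F 0 = eigSum F (B * A) + Fintype.card ι * F 0 := by
  have h := congrArg (fun p => (p.roots.map F).sum) (charpoly_mul_comm' A B)
  simp only [Polynomial.roots_mul
    ((Polynomial.monic_X_pow _).mul (charpoly_monic _)).ne_zero, Polynomial.roots_pow,
    Polynomial.roots_X, Multiset.map_add, Multiset.sum_add, Multiset.map_nsmul,
    Multiset.map_singleton, Multiset.sum_nsmul, Multiset.sum_singleton, nsmul_eq_mul] at h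
  rw [eigSum, eigSum, add_comm, h, add_comm]

lemma eigSum_eq_eigSum_submatrix_add (F : ℂ → ℂ) (p : ι → Prop) [DecidablePred p]
    (A : Matrix ι ι ℂ) (h : ∀ i j, ¬ (p i ∧ p j) → A i j = 0) :
    eigSum F A = eigSum F (A.submatrix (Subtype.val : {i // p i} → ι) Subtype.val) +
      Fintype.card {i // ¬ p i} * F 0 := by
  rw [← eigSum_submatrix_equiv F (Equiv.sumCompl p) A, ← eigSum_zero, ← eigSum_fromBlocks_diagonal]
  congr 1
  ext (i | i) (j | j)
  · simp
  · simp [h i j fun hij => j.2 hij.2]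
  · simp [h i j fun hij => i.2 hij.1]
  · simp [h i j fun hij => i.2 hij.1]

end EigenvalueSums

section HermitianCalculus

open scoped Matrix.Norms.L2Operator

variable {ι : Type*} [Fintype ι] [DecidableEq ι] {A : Matrix ι ι ℂ}

/-- The functional calculus `φ ↦ φ(A)` of a Hermitian matrix `A`, for arbitrary functions
`φ : ℝ → ℂ`, defined by diagonalizing `A`. -/
def hermitianCalculus (hA : A.IsHermitian) : (ℝ → ℂ) →ₐ[ℂ] Matrix ι ι ℂ :=
  ((Unitary.conjStarAlgAut ℂ (Matrix ι ι ℂ) hA.eigenvectorUnitary).toAlgEquiv.toAlgHom.comp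
    (diagonalAlgHom ℂ)).comp (AlgHom.pi fun i => Pi.evalAlgHom ℂ _ (hA.eigenvalues i))

lemma hermitianCalculus_apply (hA : A.IsHermitian) (φ : ℝ → ℂ) :
    hermitianCalculus hA φ = hA.eigenvectorUnitary * diagonal (fun i => φ (hA.eigenvalues i)) *
      star (hA.eigenvectorUnitary : Matrix ι ι ℂ) :=
  rfl

lemma hermitianCalculus_ofReal (hA : A.IsHermitian) : hermitianCalculus hA Complex.ofReal = A :=
  hA.spectral_theorem.symm

lemma hermitianCalculus_star (hA : A.IsHermitian) (φ : ℝ → ℂ) :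
    hermitianCalculus hA (star φ) = (hermitianCalculus hA φ)ᴴ := by
  simp only [hermitianCalculus_apply, star_eq_conjTranspose, conjTranspose_mul,
    conjTranspose_conjTranspose, diagonal_conjTranspose, Matrix.mul_assoc]
  rfl

lemma eigSum_hermitianCalculus (F : ℂ → ℂ) (hA : A.IsHermitian) (φ : ℝ → ℂ) :
    eigSum F (hermitianCalculus hA φ) = ∑ i, F (φ (hA.eigenvalues i)) := by
  rw [hermitianCalculus_apply, Matrix.mul_assoc, eigSum_mul_comm, Matrix.mul_assoc,
    Unitary.coe_star_mul_self, Matrix.mul_one, eigSum_diagonal]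

lemma trace_hermitianCalculus (hA : A.IsHermitian) (φ : ℝ → ℂ) :
    (hermitianCalculus hA φ).trace = ∑ i, φ (hA.eigenvalues i) := by
  rw [hermitianCalculus_apply, Matrix.mul_assoc, trace_mul_comm, Matrix.mul_assoc,
    Unitary.coe_star_mul_self, Matrix.mul_one, trace_diagonal]

lemma norm_hermitianCalculus_le (hA : A.IsHermitian) {φ : ℝ → ℂ} {C : ℝ} (hC : 0 ≤ C)
    (hφ : ∀ x, ‖φ x‖ ≤ C) : ‖hermitianCalculus hA φ‖ ≤ C := by
  rw [hermitianCalculus_apply, ← Unitary.coe_star, CStarRing.norm_mul_coe_unitary,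
    CStarRing.norm_coe_unitary_mul, l2_opNorm_diagonal]
  exact (pi_norm_le_iff_of_nonneg hC).2 fun i => hφ _

end HermitianCalculus

section TraceNorm

open scoped Matrix.Norms.L2Operator

variable {ι : Type*} [Fintype ι] [DecidableEq ι] {A B P : Matrix ι ι ℂ} {c d : ℝ}

lemma l2_opNorm_one_le : ‖(1 : Matrix ι ι ℂ)‖ ≤ 1 := by
  rw [← diagonal_one, l2_opNorm_diagonal]
  exact (pi_norm_le_iff_of_nonneg zero_le_one).2 fun i => by simp

/-- `‖A‖₁ ≤ c` for the trace norm `‖·‖₁`, which is the dual norm of the operator norm under the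
pairing `(X, A) ↦ tr (X * A)`. -/
def TraceNormLE (A : Matrix ι ι ℂ) (c : ℝ) : Prop :=
  ∀ X : Matrix ι ι ℂ, ‖X‖ ≤ 1 → ‖(X * A).trace‖ ≤ c

namespace TraceNormLE

lemma nonneg (h : TraceNormLE A c) : 0 ≤ c := by
  simpa using h 0 (by simp)

lemma norm_trace_le (h : TraceNormLE A c) : ‖A.trace‖ ≤ c := by
  simpa using h 1 l2_opNorm_one_le

lemma norm_trace_mul_le (h : TraceNormLE A c) (X : Matrix ι ι ℂ) :
    ‖(X * A).trace‖ ≤ ‖X‖ * c := by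
  rcases eq_or_ne X 0 with rfl | hX
  · simp
  have hnorm : 0 < ‖X‖ := norm_pos_iff.2 hX
  have hunit : ‖((‖X‖⁻¹ : ℝ) : ℂ) • X‖ ≤ 1 := by
    rw [norm_smul, Complex.norm_real, norm_inv, norm_norm, inv_mul_cancel₀ hnorm.ne']
  have := h _ hunit
  rwa [smul_mul_assoc, trace_smul, norm_smul, Complex.norm_real, norm_inv, norm_norm,
    inv_mul_le_iff₀ hnorm] at this

lemma mono (h : TraceNormLE A c) (hcd : c ≤ d) : TraceNormLE A d :=
  fun X hX => (h X hX).trans hcd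

lemma add (hA : TraceNormLE A c) (hB : TraceNormLE B d) : TraceNormLE (A + B) (c + d) := by
  intro X hX
  rw [Matrix.mul_add, trace_add]
  exact (norm_add_le _ _).trans (add_le_add (hA X hX) (hB X hX))

lemma neg (hA : TraceNormLE A c) : TraceNormLE (-A) c := by
  intro X hX
  rw [Matrix.mul_neg, trace_neg, norm_neg]
  exact hA X hX

lemma mul_left (h : TraceNormLE A c) (P : Matrix ι ι ℂ) : TraceNormLE (P * A) (‖P‖ * c) := by
  intro X hX
  rw [← Matrix.mul_assoc]
  refine (h.norm_trace_mul_le _).trans (mul_le_mul_of_nonneg_right ?_ h.nonneg)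
  exact (norm_mul_le X P).trans (mul_le_of_le_one_left (norm_nonneg P) hX)

lemma mul_right (h : TraceNormLE A c) (P : Matrix ι ι ℂ) : TraceNormLE (A * P) (‖P‖ * c) := by
  intro X hX
  rw [← Matrix.mul_assoc, trace_mul_comm, ← Matrix.mul_assoc]
  refine (h.norm_trace_mul_le _).trans (mul_le_mul_of_nonneg_right ?_ h.nonneg)
  exact (norm_mul_le P X).trans (mul_le_of_le_one_right (norm_nonneg P) hX)

lemma conjTranspose (h : TraceNormLE A c) : TraceNormLE Aᴴ c := by
  intro X hX
  rw [trace_mul_comm, ← conjTranspose_conjTranspose X, ← conjTranspose_mul, trace_conjTranspose,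
    norm_star]
  exact h Xᴴ (by rwa [l2_opNorm_conjTranspose])

end TraceNormLE

lemma norm_dotProduct_mulVec_le (X : Matrix ι ι ℂ) (a b : ι → ℂ) :
    ‖a ⬝ᵥ X *ᵥ b‖ ≤ ‖X‖ * (‖WithLp.toLp 2 a‖ * ‖WithLp.toLp 2 b‖) := by
  have hinner : a ⬝ᵥ X *ᵥ b =
      inner ℂ (WithLp.toLp 2 (star a) : EuclideanSpace ℂ ι) (WithLp.toLp 2 (X *ᵥ b)) := by
    rw [EuclideanSpace.inner_toLp_toLp, star_star, dotProduct_comm]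
  have hstar : ‖WithLp.toLp 2 (star a)‖ = ‖WithLp.toLp 2 a‖ := by
    simp [EuclideanSpace.norm_eq]
  calc ‖a ⬝ᵥ X *ᵥ b‖ ≤ ‖WithLp.toLp 2 a‖ * ‖WithLp.toLp 2 (X *ᵥ b)‖ := by
        rw [hinner, ← hstar]
        exact norm_inner_le_norm _ _
    _ ≤ ‖WithLp.toLp 2 a‖ * (‖X‖ * ‖WithLp.toLp 2 b‖) :=
        mul_le_mul_of_nonneg_left (l2_opNorm_mulVec X (WithLp.toLp 2 b)) (norm_nonneg _)
    _ = ‖X‖ * (‖WithLp.toLp 2 a‖ * ‖WithLp.toLp 2 b‖) := by ring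

lemma norm_apply_le_l2_opNorm (X : Matrix ι ι ℂ) (i j : ι) : ‖X i j‖ ≤ ‖X‖ := by
  simpa using norm_dotProduct_mulVec_le X (Pi.single i 1) (Pi.single j 1)

lemma norm_toLp_le_sqrt_card {κ : Type*} [Fintype κ] {a : κ → ℂ} (ha : ∀ i, ‖a i‖ ≤ 1) :
    ‖WithLp.toLp 2 a‖ ≤ √(Fintype.card κ) := by
  rw [EuclideanSpace.norm_eq]
  refine Real.sqrt_le_sqrt ((Finset.sum_le_sum (g := fun _ => (1 : ℝ)) fun i _ => ?_).trans
    (by simp))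
  exact pow_le_one₀ (norm_nonneg _) (ha i)

lemma norm_dotProduct_mulVec_le_card {X : Matrix ι ι ℂ} (hX : ‖X‖ ≤ 1) {a b : ι → ℂ}
    (ha : ∀ i, ‖a i‖ ≤ 1) (hb : ∀ i, ‖b i‖ ≤ 1) : ‖a ⬝ᵥ X *ᵥ b‖ ≤ Fintype.card ι := by
  calc ‖a ⬝ᵥ X *ᵥ b‖ ≤ 1 * (√(Fintype.card ι) * √(Fintype.card ι)) := by
        refine (norm_dotProduct_mulVec_le X a b).trans ?_
        gcongr
        exacts [norm_toLp_le_sqrt_card ha, norm_toLp_le_sqrt_card hb]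
    _ = Fintype.card ι := by rw [one_mul, Real.mul_self_sqrt (Nat.cast_nonneg _)]

lemma traceNormLE_sum_norm (A : Matrix ι ι ℂ) : TraceNormLE A (∑ i, ∑ j, ‖A i j‖) := by
  intro X hX
  rw [trace, Finset.sum_comm]
  refine (norm_sum_le _ _).trans (Finset.sum_le_sum fun i _ => ?_)
  refine (norm_sum_le _ _).trans (Finset.sum_le_sum fun j _ => ?_)
  rw [norm_mul]
  exact mul_le_of_le_one_left (norm_nonneg _) ((norm_apply_le_l2_opNorm X i j).trans hX)

end TraceNorm

section TraceLipschitz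

open scoped Matrix.Norms.L2Operator

universe u

/-- `χ : ℝ → ℂ` is operator Lipschitz for the trace norm on Hermitian matrices, with a constant
that does not depend on the size of the matrices. -/
def TraceLipschitz (χ : ℝ → ℂ) : Prop :=
  ∃ C : ℝ, 0 ≤ C ∧ ∀ {ι : Type u} [Fintype ι] [DecidableEq ι] {A B : Matrix ι ι ℂ}
    (hA : A.IsHermitian) (hB : B.IsHermitian) (c : ℝ), TraceNormLE (A - B) c →
      TraceNormLE (hermitianCalculus hA χ - hermitianCalculus hB χ) (C * c)

lemma traceLipschitz_algebraMap (z : ℂ) : TraceLipschitz.{u} (algebraMap ℂ (ℝ → ℂ) z) := by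
  refine ⟨0, le_rfl, fun hA hB c _ X _ => ?_⟩
  rw [AlgHom.commutes, AlgHom.commutes, sub_self, Matrix.mul_zero, trace_zero, norm_zero,
    zero_mul]

namespace TraceLipschitz

variable {χ ψ : ℝ → ℂ}

lemma add (hχ : TraceLipschitz.{u} χ) (hψ : TraceLipschitz.{u} ψ) :
    TraceLipschitz.{u} (χ + ψ) := by
  obtain ⟨C, hC, h⟩ := hχ
  obtain ⟨D, hD, h'⟩ := hψ
  refine ⟨C + D, add_nonneg hC hD, fun hA hB c hc => ?_⟩
  rw [map_add, map_add, add_sub_add_comm, add_mul]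
  exact (h hA hB c hc).add (h' hA hB c hc)

lemma star (hχ : TraceLipschitz.{u} χ) : TraceLipschitz.{u} (star χ) := by
  obtain ⟨C, hC, h⟩ := hχ
  refine ⟨C, hC, fun hA hB c hc => ?_⟩
  rw [hermitianCalculus_star, hermitianCalculus_star, ← conjTranspose_sub]
  exact (h hA hB c hc).conjTranspose

lemma mul (hχ : TraceLipschitz.{u} χ) (hψ : TraceLipschitz.{u} ψ) {M : ℝ}
    (hχM : ∀ x, ‖χ x‖ ≤ M) (hψM : ∀ x, ‖ψ x‖ ≤ M) : TraceLipschitz.{u} (χ * ψ) := by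
  obtain ⟨C, hC, h⟩ := hχ
  obtain ⟨D, hD, h'⟩ := hψ
  have hM : 0 ≤ M := (norm_nonneg _).trans (hχM 0)
  refine ⟨M * D + M * C, by positivity, fun {ι} _ _ A B hA hB c hc => ?_⟩
  have hsplit : hermitianCalculus hA (χ * ψ) - hermitianCalculus hB (χ * ψ) =
      hermitianCalculus hA χ * (hermitianCalculus hA ψ - hermitianCalculus hB ψ) +
        (hermitianCalculus hA χ - hermitianCalculus hB χ) * hermitianCalculus hB ψ := by
    rw [map_mul, map_mul]
    noncomm_ring
  rw [hsplit, add_mul, mul_assoc, mul_assoc]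
  refine TraceNormLE.add ?_ ?_
  · exact ((h' hA hB c hc).mul_left _).mono (mul_le_mul_of_nonneg_right
      (norm_hermitianCalculus_le hA hM hχM) (h' hA hB c hc).nonneg)
  · exact ((h hA hB c hc).mul_right _).mono (mul_le_mul_of_nonneg_right
      (norm_hermitianCalculus_le hB hM hψM) (h hA hB c hc).nonneg)

end TraceLipschitz

/-- The function `x ↦ (x + i)⁻¹`, whose values on Hermitian matrices are resolvents. -/
def resolventFun (x : ℝ) : ℂ := ((x : ℂ) + Complex.I)⁻¹

lemma ofReal_add_I_ne_zero (x : ℝ) : (x : ℂ) + Complex.I ≠ 0 :=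
  fun h => by simpa using congrArg Complex.im h

lemma norm_resolventFun_le_one (x : ℝ) : ‖resolventFun x‖ ≤ 1 := by
  rw [resolventFun, norm_inv]
  exact inv_le_one_of_one_le₀ (by simpa using Complex.abs_im_le_norm ((x : ℂ) + Complex.I))

lemma resolventFun_mul :
    resolventFun * (Complex.ofReal + algebraMap ℂ (ℝ → ℂ) Complex.I) = 1 :=
  funext fun x => inv_mul_cancel₀ (ofReal_add_I_ne_zero x)

lemma hermitianCalculus_resolventFun_sub {ι : Type*} [Fintype ι] [DecidableEq ι]
    {A B : Matrix ι ι ℂ} (hA : A.IsHermitian) (hB : B.IsHermitian) :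
    hermitianCalculus hA resolventFun - hermitianCalculus hB resolventFun =
      hermitianCalculus hA resolventFun * (-(A - B) * hermitianCalculus hB resolventFun) := by
  have hleft := congrArg (hermitianCalculus hA) resolventFun_mul
  have hright := congrArg (hermitianCalculus hB) ((mul_comm _ _).trans resolventFun_mul)
  simp only [map_mul, map_add, map_one, hermitianCalculus_ofReal, AlgHom.commutes] at hleft hright
  set R := hermitianCalculus hA resolventFun
  set S := hermitianCalculus hB resolventFun
  calc R - S = R * ((B + algebraMap ℂ _ Complex.I) * S) -
        R * (A + algebraMap ℂ _ Complex.I) * S := by rw [hright, hleft, mul_one, one_mul]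
    _ = R * (-(A - B) * S) := by noncomm_ring

lemma traceLipschitz_resolventFun : TraceLipschitz.{u} resolventFun := by
  refine ⟨1, zero_le_one, fun hA hB c hc => ?_⟩
  have hnorm {ι : Type u} [Fintype ι] [DecidableEq ι] {A : Matrix ι ι ℂ} (hA : A.IsHermitian) :
      ‖hermitianCalculus hA resolventFun‖ ≤ 1 :=
    norm_hermitianCalculus_le hA zero_le_one norm_resolventFun_le_one
  rw [hermitianCalculus_resolventFun_sub hA hB, one_mul]
  refine ((hc.neg.mul_right _).mul_left _).mono ?_
  rw [← mul_assoc]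
  exact mul_le_of_le_one_left hc.nonneg (mul_le_one₀ (hnorm hA) (norm_nonneg _) (hnorm hB))

/-- The trace Lipschitz functions among the continuous functions on `ℝ ∪ {∞}`. -/
def traceLipschitzSubalgebra : StarSubalgebra ℂ C(OnePoint ℝ, ℂ) where
  carrier := {g | TraceLipschitz.{u} fun x : ℝ => g x}
  mul_mem' {g h} hg hh := hg.mul hh (M := max ‖g‖ ‖h‖)
    (fun x => (g.norm_coe_le_norm x).trans (le_max_left _ _))
    (fun x => (h.norm_coe_le_norm x).trans (le_max_right _ _))
  add_mem' hg hh := hg.add hh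
  algebraMap_mem' := traceLipschitz_algebraMap
  star_mem' hg := hg.star

lemma tendsto_resolventFun_coclosedCompact :
    Tendsto resolventFun (coclosedCompact ℝ) (𝓝 0) := by
  rw [coclosedCompact_eq_cocompact]
  refine tendsto_inv₀_cobounded.comp ?_
  refine tendsto_norm_atTop_iff_cobounded.1 (tendsto_atTop_mono (fun x => ?_)
    (tendsto_norm_cocompact_atTop (E := ℝ)))
  simpa using Complex.abs_re_le_norm ((x : ℂ) + Complex.I)

lemma continuous_resolventFun : Continuous resolventFun :=
  Continuous.inv₀ (by fun_prop) ofReal_add_I_ne_zero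

/-- The extension of `x ↦ (x + i)⁻¹` to `ℝ ∪ {∞}`. -/
def resolventOnePoint : C(OnePoint ℝ, ℂ) :=
  OnePoint.continuousMapMk ⟨resolventFun, continuous_resolventFun⟩ 0
    tendsto_resolventFun_coclosedCompact

lemma resolventOnePoint_injective : Function.Injective resolventOnePoint := by
  have hne (x : ℝ) : resolventFun x ≠ 0 := inv_ne_zero (ofReal_add_I_ne_zero x)
  intro x y hxy
  induction x using OnePoint.rec <;> induction y using OnePoint.rec
  · rfl
  · exact absurd hxy.symm (hne _)
  · exact absurd hxy (hne _)
  · exact congrArg _ (Complex.ofReal_injective (add_right_cancel (inv_injective hxy)))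

lemma traceLipschitzSubalgebra_topologicalClosure :
    traceLipschitzSubalgebra.{u}.topologicalClosure = ⊤ := by
  refine ContinuousMap.starSubalgebra_topologicalClosure_eq_top_of_separatesPoints _ ?_
  intro x y hxy
  exact ⟨resolventOnePoint, ⟨resolventOnePoint, traceLipschitz_resolventFun, rfl⟩,
    resolventOnePoint_injective.ne hxy⟩

/-- By Stone–Weierstrass on `ℝ ∪ {∞}`. -/
lemma exists_traceLipschitz_norm_sub_le {φ : ℝ → ℂ} (hφ : Continuous φ)
    (hφc : HasCompactSupport φ) {ε : ℝ} (hε : 0 < ε) :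
    ∃ χ : ℝ → ℂ, TraceLipschitz.{u} χ ∧ ∀ x, ‖φ x - χ x‖ ≤ ε := by
  let g : C(OnePoint ℝ, ℂ) := OnePoint.continuousMapMk ⟨φ, hφ⟩ 0
    (by rw [coclosedCompact_eq_cocompact]; exact hφc.is_zero_at_infty)
  have hg : g ∈ closure (traceLipschitzSubalgebra.{u} : Set C(OnePoint ℝ, ℂ)) := by
    rw [← StarSubalgebra.topologicalClosure_coe, traceLipschitzSubalgebra_topologicalClosure]
    trivial
  obtain ⟨χ, hχ, hgχ⟩ := Metric.mem_closure_iff.1 hg ε hε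
  exact ⟨fun x => χ x, hχ, fun x =>
    ((g - χ).norm_coe_le_norm x).trans (dist_eq_norm g χ ▸ hgχ.le)⟩

lemma hasCompactSupport_comp_ofReal {F : ℂ → ℂ} (hFc : HasCompactSupport F) :
    HasCompactSupport fun x : ℝ => F x :=
  hFc.comp_isClosedEmbedding Complex.isometry_ofReal.isClosedEmbedding

theorem exists_norm_eigSum_sub_le {F : ℂ → ℂ} (hF : Continuous F) (hFc : HasCompactSupport F)
    {ε : ℝ} (hε : 0 < ε) :
    ∃ C : ℝ, 0 ≤ C ∧ ∀ {ι : Type u} [Fintype ι] [DecidableEq ι] {A B : Matrix ι ι ℂ},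
      A.IsHermitian → B.IsHermitian → ∀ c : ℝ, TraceNormLE (A - B) c →
        ‖eigSum F A - eigSum F B‖ ≤ ε * Fintype.card ι + C * c := by
  obtain ⟨χ, ⟨C, hC, hLip⟩, hχ⟩ := exists_traceLipschitz_norm_sub_le.{u}
    (hF.comp Complex.continuous_ofReal) (hasCompactSupport_comp_ofReal hFc) (half_pos hε)
  refine ⟨C, hC, fun {ι} _ _ A B hA hB c hc => ?_⟩
  have happrox {A : Matrix ι ι ℂ} (hA : A.IsHermitian) :
      ‖eigSum F A - (hermitianCalculus hA χ).trace‖ ≤ Fintype.card ι * (ε / 2) := by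
    rw [eigSum_eq_sum_eigenvalues F hA, trace_hermitianCalculus, ← Finset.sum_sub_distrib,
      ← nsmul_eq_mul]
    exact (norm_sum_le _ _).trans (Finset.sum_le_card_nsmul _ _ _ fun i _ => hχ _)
  have hA' := happrox hA
  have hB' := norm_sub_rev (eigSum F B) _ ▸ happrox hB
  have hAB := (hLip hA hB c hc).norm_trace_le
  rw [trace_sub] at hAB
  calc ‖eigSum F A - eigSum F B‖
      = ‖(eigSum F A - (hermitianCalculus hA χ).trace) +
          ((hermitianCalculus hA χ).trace - (hermitianCalculus hB χ).trace) +
          ((hermitianCalculus hB χ).trace - eigSum F B)‖ := by congr 1; ring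
    _ ≤ Fintype.card ι * (ε / 2) + C * c + Fintype.card ι * (ε / 2) :=
        norm_add₃_le.trans (add_le_add_three hA' hAB hB')
    _ = ε * Fintype.card ι + C * c := by ring

end TraceLipschitz

section HermitianPart

variable {ι : Type*}

/-- The Hermitian part `(A + Aᴴ) / 2` of a square matrix. -/
def hermitianPart (A : Matrix ι ι ℂ) : Matrix ι ι ℂ := (2⁻¹ : ℂ) • (A + Aᴴ)

lemma hermitianPart_apply (A : Matrix ι ι ℂ) (i j : ι) :
    hermitianPart A i j = 2⁻¹ * (A i j + star (A j i)) :=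
  rfl

lemma isHermitian_hermitianPart (A : Matrix ι ι ℂ) : (hermitianPart A).IsHermitian :=
  IsHermitian.ext fun i j => by simp [hermitianPart_apply, add_comm]

lemma hermitianPart_eq_self {A : Matrix ι ι ℂ} (hA : A.IsHermitian) : hermitianPart A = A := by
  rw [hermitianPart, hA.eq, ← two_smul ℂ A, smul_smul, inv_mul_cancel₀ two_ne_zero, one_smul]

lemma continuous_hermitianPart : Continuous (hermitianPart : Matrix ι ι ℂ → Matrix ι ι ℂ) :=
  (continuous_id.add continuous_id.matrix_conjTranspose).const_smul (2⁻¹ : ℂ)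

end HermitianPart

section EigenvalueSumContinuity

variable {ι : Type*} [Fintype ι] [DecidableEq ι] {F : ℂ → ℂ}

lemma continuousOn_eigSum (hF : Continuous F) (hFc : HasCompactSupport F) :
    ContinuousOn (eigSum F) {A : Matrix ι ι ℂ | A.IsHermitian} := by
  refine fun A hA => Metric.tendsto_nhds.2 fun ε hε => ?_
  set δ : ℝ := ε / (2 * (Fintype.card ι + 1)) with hδ
  obtain ⟨C, -, hC⟩ := exists_norm_eigSum_sub_le hF hFc (ε := δ) (by positivity)
  have hcont : Continuous fun B : Matrix ι ι ℂ => C * ∑ i, ∑ j, ‖(B - A) i j‖ :=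
    continuous_const.mul <| continuous_finsetSum _ fun i _ => continuous_finsetSum _ fun j _ =>
      ((continuous_id.sub continuous_const).matrix_elem i j).norm
  have hsmall : ∀ᶠ B in 𝓝[{A : Matrix ι ι ℂ | A.IsHermitian}] A,
      C * ∑ i, ∑ j, ‖(B - A) i j‖ < ε / 2 :=
    hcont.continuousWithinAt.eventually_lt_const (by simpa using half_pos hε)
  filter_upwards [hsmall, self_mem_nhdsWithin] with B hBsmall hB
  have hcard : δ * Fintype.card ι ≤ ε / 2 := by
    rw [hδ, div_mul_eq_mul_div, div_le_div_iff₀ (by positivity) two_pos]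
    nlinarith
  rw [dist_eq_norm]
  linarith [hC hB hA _ (traceNormLE_sum_norm _)]

lemma exists_norm_eigSum_le (hF : Continuous F) (hFc : HasCompactSupport F) :
    ∃ M : ℝ, ∀ A : Matrix ι ι ℂ, A.IsHermitian → ‖eigSum F A‖ ≤ M := by
  obtain ⟨M, hM⟩ := hF.bounded_above_of_compact_support hFc
  refine ⟨Fintype.card ι • M, fun A hA => ?_⟩
  rw [eigSum_eq_sum_eigenvalues F hA]
  exact (norm_sum_le _ _).trans (Finset.sum_le_card_nsmul _ _ _ fun i _ => hM _)

lemma continuous_eigSum_comp {X : Type*} [TopologicalSpace X] {G : X → Matrix ι ι ℂ}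
    (hF : Continuous F) (hFc : HasCompactSupport F) (hG : ∀ x, (G x).IsHermitian)
    (hGc : Continuous G) : Continuous fun x => eigSum F (G x) :=
  (continuousOn_eigSum hF hFc).comp_continuous hGc hG

variable {α : Type*} [MeasurableSpace α] {μ : Measure α} {G : α → Matrix ι ι ℂ}

lemma aestronglyMeasurable_eigSum_comp (hF : Continuous F) (hFc : HasCompactSupport F)
    (hG : ∀ x, (G x).IsHermitian) (hGm : ∀ i j, AEStronglyMeasurable (fun x => G x i j) μ) :
    AEStronglyMeasurable (fun x => eigSum F (G x)) μ := by
  have hcont : Continuous fun A : ι → ι → ℂ => eigSum F (hermitianPart (of A)) :=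
    continuous_eigSum_comp hF hFc (fun A => isHermitian_hermitianPart _)
      (continuous_hermitianPart.comp continuous_id)
  have hmeas : AEStronglyMeasurable (fun x i j => G x i j) μ :=
    (aemeasurable_pi_lambda _ fun i => aemeasurable_pi_lambda _ fun j =>
      (hGm i j).aemeasurable).aestronglyMeasurable
  exact (hcont.comp_aestronglyMeasurable hmeas).congr
    (.of_forall fun x => congrArg (eigSum F) (hermitianPart_eq_self (hG x)))

lemma integrable_eigSum_comp [IsFiniteMeasure μ] (hF : Continuous F) (hFc : HasCompactSupport F)
    (hG : ∀ x, (G x).IsHermitian) (hGm : ∀ i j, AEStronglyMeasurable (fun x => G x i j) μ) :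
    Integrable (fun x => eigSum F (G x)) μ := by
  obtain ⟨M, hM⟩ := exists_norm_eigSum_le (ι := ι) hF hFc
  exact .of_bound (aestronglyMeasurable_eigSum_comp hF hFc hG hGm) M
    (.of_forall fun x => hM _ (hG x))

end EigenvalueSumContinuity

section HermitianDilation

variable {ι κ : Type*} [Fintype ι] [DecidableEq ι] [Fintype κ] [DecidableEq κ]

/-- The Hermitian matrix with blocks `0, A, Aᴴ, 0`, whose nonzero eigenvalues are `±σ` for the
nonzero singular values `σ` of `A`. -/
def hermitianDilation {ι κ : Type*} (A : Matrix ι κ ℂ) : Matrix (ι ⊕ κ) (ι ⊕ κ) ℂ :=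
  fromBlocks 0 A Aᴴ 0

lemma isHermitian_hermitianDilation {ι κ : Type*} (A : Matrix ι κ ℂ) :
    (hermitianDilation A).IsHermitian := by
  rw [IsHermitian, hermitianDilation, fromBlocks_conjTranspose]
  simp

lemma eigSum_mul_self (F : ℂ → ℂ) {A : Matrix ι ι ℂ} (hA : A.IsHermitian) :
    eigSum F (A * A) = eigSum (fun z => F (z * z)) A := by
  conv_lhs => rw [← hermitianCalculus_ofReal hA, ← map_mul]
  rw [eigSum_hermitianCalculus, eigSum_eq_sum_eigenvalues _ hA]
  rfl

lemma svSum_eq_eigSum {ι κ : Type*} [Fintype ι] [DecidableEq ι] [Fintype κ] (φ : ℝ → ℂ)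
    (A : Matrix ι κ ℂ) :
    svSum φ A = eigSum (fun z => φ √z.re) (A * Aᴴ) -
      (Fintype.card ι - min (Fintype.card ι) (Fintype.card κ) : ℕ) * φ 0 := by
  rw [eigSum_eq_sum_eigenvalues _ (isHermitian_mul_conjTranspose_self A)]
  rfl

lemma eigSum_hermitianDilation (φ : ℝ → ℂ) (A : Matrix ι κ ℂ) :
    eigSum (fun z => φ ‖z‖) (hermitianDilation A) = 2 * svSum φ A +
      ((Fintype.card ι + Fintype.card κ : ℕ) -
        2 * (min (Fintype.card ι) (Fintype.card κ) : ℕ)) * φ 0 := by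
  have hsq : hermitianDilation A * hermitianDilation A = fromBlocks (A * Aᴴ) 0 0 (Aᴴ * A) := by
    rw [hermitianDilation, fromBlocks_multiply]
    simp
  have habs : eigSum (fun z => φ ‖z‖) (hermitianDilation A) =
      eigSum (fun z => φ √z.re) (hermitianDilation A * hermitianDilation A) := by
    have hA := isHermitian_hermitianDilation A
    rw [eigSum_mul_self _ hA, eigSum_eq_sum_eigenvalues _ hA, eigSum_eq_sum_eigenvalues _ hA]
    refine Finset.sum_congr rfl fun i _ => ?_
    rw [← Complex.ofReal_mul, Complex.ofReal_re, Real.sqrt_mul_self_eq_abs, Complex.norm_real,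
      Real.norm_eq_abs]
  have hswap := eigSum_mul_comm_add (fun z => φ √z.re) A Aᴴ
  simp only [Complex.zero_re, Real.sqrt_zero] at hswap
  rw [habs, hsq, eigSum_fromBlocks_diagonal, svSum_eq_eigSum, Nat.cast_sub (min_le_left _ _)]
  push_cast
  linear_combination -hswap

end HermitianDilation

section TrigonometricPolynomials

/-- The trigonometric monomial `θ ↦ e^{irθ}`. -/
def trigMonomial (r : ℤ) (θ : ℝ) : ℂ := Complex.exp (Complex.I * r * θ)

/-- The space of trigonometric polynomials of period `2π`. -/
def trigPoly : Submodule ℂ (ℝ → ℂ) := .span ℂ (Set.range trigMonomial)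

lemma continuous_trigMonomial (r : ℤ) : Continuous (trigMonomial r) := by
  unfold trigMonomial
  fun_prop

lemma norm_trigMonomial (r : ℤ) (θ : ℝ) : ‖trigMonomial r θ‖ = 1 := by
  simp [trigMonomial, Complex.norm_exp]

lemma trigMonomial_zero (θ : ℝ) : trigMonomial 0 θ = 1 := by simp [trigMonomial]

lemma trigMonomial_mul (r k : ℤ) (θ : ℝ) :
    trigMonomial r θ * trigMonomial k θ = trigMonomial (r + k) θ := by
  rw [trigMonomial, trigMonomial, trigMonomial, ← Complex.exp_add]
  congr 1
  push_cast
  ring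

lemma star_trigMonomial (r : ℤ) (θ : ℝ) : star (trigMonomial r θ) = trigMonomial (-r) θ := by
  simp [trigMonomial, ← Complex.exp_conj]

lemma periodic_trigMonomial (r : ℤ) : Function.Periodic (trigMonomial r) (2 * π) := fun θ =>
  Complex.exp_eq_exp_iff_exists_int.2 ⟨r, by push_cast; ring⟩

lemma fourier_eq_trigMonomial (r : ℤ) (θ : ℝ) :
    fourier r (θ : AddCircle (2 * π)) = trigMonomial r θ := by
  rw [fourier_coe_apply, trigMonomial]
  congr 1
  push_cast
  field_simp

lemma trigMonomial_mem_trigPoly (r : ℤ) : trigMonomial r ∈ trigPoly :=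
  Submodule.subset_span ⟨r, rfl⟩

lemma mem_trigPoly_of_mem_span_fourier {p : C(AddCircle (2 * π), ℂ)}
    (hp : p ∈ Submodule.span ℂ (Set.range fourier)) : (fun θ : ℝ => p θ) ∈ trigPoly := by
  induction hp using Submodule.span_induction with
  | mem _ hx =>
    obtain ⟨r, rfl⟩ := hx
    simpa only [fourier_eq_trigMonomial] using trigMonomial_mem_trigPoly r
  | zero => exact trigPoly.zero_mem
  | add _ _ _ _ hx hy => exact trigPoly.add_mem hx hy
  | smul c _ _ hx => exact trigPoly.smul_mem c hx

variable {g h : ℝ → ℂ}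

lemma continuous_of_mem_trigPoly (hh : h ∈ trigPoly) : Continuous h := by
  induction hh using Submodule.span_induction with
  | mem _ hx => obtain ⟨r, rfl⟩ := hx; exact continuous_trigMonomial r
  | zero => exact continuous_const
  | add _ _ _ _ hx hy => exact hx.add hy
  | smul c _ _ hx => exact hx.const_smul c

lemma intervalIntegrable_of_mem_trigPoly (hh : h ∈ trigPoly) (a b : ℝ) :
    IntervalIntegrable h volume a b :=
  (continuous_of_mem_trigPoly hh).intervalIntegrable a b

lemma periodic_of_mem_trigPoly (hh : h ∈ trigPoly) : Function.Periodic h (2 * π) := by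
  induction hh using Submodule.span_induction with
  | mem _ hx => obtain ⟨r, rfl⟩ := hx; exact periodic_trigMonomial r
  | zero => exact fun _ => rfl
  | add _ _ _ _ hx hy => exact hx.add hy
  | smul c _ _ hx => exact hx.smul c

lemma star_mem_trigPoly (hh : h ∈ trigPoly) : (fun θ => star (h θ)) ∈ trigPoly := by
  induction hh using Submodule.span_induction with
  | mem _ hx =>
    obtain ⟨r, rfl⟩ := hx
    simpa only [star_trigMonomial] using trigMonomial_mem_trigPoly (-r)
  | zero =>
    simp only [Pi.zero_apply, star_zero]
    exact trigPoly.zero_mem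
  | add _ _ _ _ hx hy =>
    simp only [Pi.add_apply, star_add]
    exact trigPoly.add_mem hx hy
  | smul c _ _ hx =>
    simp only [Pi.smul_apply, star_smul]
    exact trigPoly.smul_mem (star c) hx

lemma neg_pi_le_pi : -π ≤ π := neg_le_self Real.pi_pos.le

lemma neg_pi_add_two_pi : -π + 2 * π = π := by ring

lemma exists_mem_trigPoly_norm_sub_le (hg : ContinuousOn g (Set.Icc (-π) π)) (hper : g (-π) = g π)
    {ε : ℝ} (hε : 0 < ε) : ∃ h ∈ trigPoly, ∀ θ ∈ Set.Ioc (-π) π, ‖g θ - h θ‖ ≤ ε := by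
  have : Fact (0 < 2 * π) := ⟨Real.two_pi_pos⟩
  let G : C(AddCircle (2 * π), ℂ) := ⟨AddCircle.liftIoc (2 * π) (-π) g,
    AddCircle.liftIoc_continuous (by rwa [neg_pi_add_two_pi]) (by rwa [neg_pi_add_two_pi])⟩
  have hG : G ∈ (Submodule.span ℂ (Set.range (@fourier (2 * π)))).topologicalClosure :=
    span_fourier_closure_eq_top (T := 2 * π) ▸ Submodule.mem_top
  obtain ⟨p, hp, hGp⟩ := Metric.mem_closure_iff.1 hG ε hε
  refine ⟨fun θ => p θ, mem_trigPoly_of_mem_span_fourier hp, fun θ hθ => ?_⟩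
  have hGθ : G θ = g θ := AddCircle.liftIoc_coe_apply (by rwa [neg_pi_add_two_pi])
  rw [← hGθ, ← dist_eq_norm]
  exact (ContinuousMap.dist_apply_le_dist _).trans hGp.le

lemma exists_mem_span_fourier_integral_norm_sub_lt {T : ℝ} [Fact (0 < T)] {G : AddCircle T → ℂ}
    (hG : Integrable G AddCircle.haarAddCircle) {ε : ℝ} (hε : 0 < ε) :
    ∃ p ∈ Submodule.span ℂ (Set.range (fourier (T := T))),
      ∫ x, ‖G x - p x‖ ∂AddCircle.haarAddCircle < ε := by
  have hGmem := memLp_one_iff_integrable.2 hG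
  have hclosure : hGmem.toLp G ∈ (Submodule.span ℂ
      (Set.range (fourierLp (T := T) 1))).topologicalClosure := by
    rw [span_fourierLp_closure_eq_top ENNReal.one_ne_top]
    exact Submodule.mem_top
  obtain ⟨q, hq, hdist⟩ := Metric.mem_closure_iff.1 hclosure ε hε
  have hrange : Set.range (fourierLp (T := T) 1) =
      (ContinuousMap.toLp (E := ℂ) 1 AddCircle.haarAddCircle ℂ).toLinearMap ''
        Set.range fourier := (Set.range_comp _ _)
  rw [hrange, ← Submodule.map_span] at hq
  obtain ⟨p, hp, rfl⟩ := hq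
  refine ⟨p, hp, ?_⟩
  rw [dist_eq_norm, L1.norm_eq_integral_norm] at hdist
  refine (integral_congr_ae ?_).trans_lt hdist
  filter_upwards [Lp.coeFn_sub (hGmem.toLp G) (ContinuousMap.toLp 1 AddCircle.haarAddCircle ℂ p),
    hGmem.coeFn_toLp, ContinuousMap.coeFn_toLp (p := 1) (𝕜 := ℂ) AddCircle.haarAddCircle p]
    with x hsub hGx hpx
  rw [ContinuousLinearMap.coe_coe, hsub, Pi.sub_apply, hGx, hpx]

lemma exists_mem_trigPoly_integral_norm_sub_lt (hg : IntervalIntegrable g volume (-π) π) {ε : ℝ}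
    (hε : 0 < ε) : ∃ h ∈ trigPoly, ∫ θ in (-π)..π, ‖g θ - h θ‖ < ε := by
  have : Fact (0 < 2 * π) := ⟨Real.two_pi_pos⟩
  have hmem : MemLp g 1 (volume.restrict (Set.Ioc (-π) (-π + 2 * π))) := by
    rw [neg_pi_add_two_pi, memLp_one_iff_integrable]
    exact (intervalIntegrable_iff_integrableOn_Ioc_of_le neg_pi_le_pi).1 hg
  obtain ⟨p, hp, hlt⟩ := exists_mem_span_fourier_integral_norm_sub_lt
    (memLp_one_iff_integrable.1 hmem.memLp_liftIoc.haarAddCircle)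
    (ε := ε / (2 * π)) (by positivity)
  refine ⟨fun θ => p θ, mem_trigPoly_of_mem_span_fourier hp, ?_⟩
  rw [AddCircle.integral_haarAddCircle, ← AddCircle.intervalIntegral_preimage (2 * π) (-π),
    smul_eq_mul, inv_mul_lt_iff₀ Real.two_pi_pos, mul_div_cancel₀ _ Real.two_pi_pos.ne',
    neg_pi_add_two_pi] at hlt
  refine (intervalIntegral.integral_congr_ae (.of_forall fun θ hθ => ?_)).trans_lt hlt
  rw [Set.uIoc_of_le neg_pi_le_pi] at hθ
  rw [AddCircle.liftIoc_coe_apply (by rwa [neg_pi_add_two_pi])]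

end TrigonometricPolynomials

section FourierCoefficients

/-- The `k`-th Fourier coefficient of a scalar function on `[-π, π]`. -/
def trigCoeff (g : ℝ → ℂ) (k : ℤ) : ℂ :=
  ((2 * π : ℝ) : ℂ)⁻¹ * ∫ θ in (-π)..π, g θ * trigMonomial (-k) θ

lemma fCoeff_apply {ρ τ : Type*} (f : ℝ → Matrix ρ τ ℂ) (k : ℤ) (a : ρ) (b : τ) :
    fCoeff f k a b = trigCoeff (fun θ => f θ a b) k := by
  simp [fCoeff, trigCoeff, trigMonomial]

variable {g h : ℝ → ℂ}

lemma intervalIntegrable_mul_trigMonomial {a b : ℝ} (hg : IntervalIntegrable g volume a b)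
    (k : ℤ) : IntervalIntegrable (fun θ => g θ * trigMonomial k θ) volume a b :=
  hg.mul_continuousOn (continuous_trigMonomial k).continuousOn

lemma intervalIntegrable_star {a b : ℝ} (hg : IntervalIntegrable g volume a b) :
    IntervalIntegrable (fun θ => star (g θ)) volume a b :=
  let L : ℂ →L[ℝ] ℂ := (starL' ℝ : ℂ ≃L[ℝ] ℂ).toContinuousLinearMap
  ⟨L.integrable_comp hg.1, L.integrable_comp hg.2⟩

lemma trigCoeff_congr_ae (hgh : g =ᵐ[volume.restrict (Set.Ioc (-π) π)] h) (k : ℤ) :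
    trigCoeff g k = trigCoeff h k := by
  rw [trigCoeff, trigCoeff, intervalIntegral.integral_of_le neg_pi_le_pi,
    intervalIntegral.integral_of_le neg_pi_le_pi,
    integral_congr_ae (hgh.mono fun θ hθ => congrArg (· * trigMonomial (-k) θ) hθ)]

lemma trigCoeff_zero (k : ℤ) : trigCoeff 0 k = 0 := by simp [trigCoeff]

lemma trigCoeff_add (hg : IntervalIntegrable g volume (-π) π)
    (hh : IntervalIntegrable h volume (-π) π) (k : ℤ) :
    trigCoeff (g + h) k = trigCoeff g k + trigCoeff h k := by
  simp only [trigCoeff, Pi.add_apply, add_mul]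
  rw [intervalIntegral.integral_add (intervalIntegrable_mul_trigMonomial hg _)
    (intervalIntegrable_mul_trigMonomial hh _), mul_add]

lemma trigCoeff_smul (c : ℂ) (g : ℝ → ℂ) (k : ℤ) : trigCoeff (c • g) k = c * trigCoeff g k := by
  simp only [trigCoeff, Pi.smul_apply, smul_eq_mul, mul_assoc,
    intervalIntegral.integral_const_mul]
  exact mul_left_comm _ _ _

lemma trigCoeff_sub (hg : IntervalIntegrable g volume (-π) π)
    (hh : IntervalIntegrable h volume (-π) π) (k : ℤ) :
    trigCoeff (fun θ => g θ - h θ) k = trigCoeff g k - trigCoeff h k := by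
  simp only [trigCoeff, sub_mul]
  rw [intervalIntegral.integral_sub (intervalIntegrable_mul_trigMonomial hg _)
    (intervalIntegrable_mul_trigMonomial hh _), mul_sub]

lemma trigCoeff_star (g : ℝ → ℂ) (k : ℤ) :
    trigCoeff (fun θ => star (g θ)) k = star (trigCoeff g (-k)) := by
  simp only [trigCoeff, ← starRingEnd_apply, map_mul, map_inv₀, Complex.conj_ofReal,
    ← intervalIntegral.intervalIntegral_conj, neg_neg]
  simp only [starRingEnd_apply, star_trigMonomial]

lemma integral_trigMonomial (r : ℤ) :
    ∫ θ in (-π)..π, trigMonomial r θ = if r = 0 then ((2 * π : ℝ) : ℂ) else 0 := by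
  split_ifs with hr
  · simp only [hr, trigMonomial_zero, intervalIntegral.integral_const, Complex.real_smul, mul_one]
    congr 1
    ring
  · have hne : Complex.I * r ≠ 0 := mul_ne_zero Complex.I_ne_zero (mod_cast hr)
    have hper : trigMonomial r π = trigMonomial r (-π) := by
      rw [← periodic_trigMonomial r (-π), neg_pi_add_two_pi]
    simp only [trigMonomial] at hper ⊢
    rw [integral_exp_mul_complex hne, hper, sub_self, zero_div]

lemma trigCoeff_trigMonomial (r k : ℤ) :
    trigCoeff (trigMonomial r) k = if k = r then 1 else 0 := by
  have hpi : ((2 * π : ℝ) : ℂ) ≠ 0 := mod_cast Real.two_pi_pos.ne'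
  simp only [trigCoeff, trigMonomial_mul, integral_trigMonomial, ← sub_eq_add_neg, sub_eq_zero,
    eq_comm (a := r), mul_ite, inv_mul_cancel₀ hpi, mul_zero]

lemma trigCoeff_const (c : ℂ) (k : ℤ) : trigCoeff (fun _ => c) k = if k = 0 then c else 0 := by
  have hconst : (fun _ : ℝ => c) = c • trigMonomial 0 := by
    ext θ
    simp [trigMonomial_zero]
  rw [hconst, trigCoeff_smul, trigCoeff_trigMonomial, mul_ite, mul_one, mul_zero]

lemma summable_norm_trigCoeff (hh : h ∈ trigPoly) : Summable fun k : ℤ => ‖trigCoeff h k‖ := by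
  induction hh using Submodule.span_induction with
  | mem _ hx =>
    obtain ⟨r, rfl⟩ := hx
    refine summable_of_ne_finset_zero (s := {r}) fun k hk => ?_
    rw [trigCoeff_trigMonomial, if_neg (by simpa using hk), norm_zero]
  | zero => simpa only [trigCoeff_zero, norm_zero] using summable_zero
  | add x y hxm hym hx hy =>
    refine (hx.add hy).of_nonneg_of_le (fun _ => norm_nonneg _) fun k => ?_
    rw [trigCoeff_add (intervalIntegrable_of_mem_trigPoly hxm _ _)
      (intervalIntegrable_of_mem_trigPoly hym _ _)]
    exact norm_add_le _ _
  | smul c _ _ hx => simpa only [trigCoeff_smul, norm_mul] using hx.mul_left ‖c‖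

lemma sum_norm_trigCoeff_le_tsum (hh : h ∈ trigPoly) {κ : Type*} [Fintype κ] {e : κ → ℤ}
    (he : Function.Injective e) : ∑ x, ‖trigCoeff h (e x)‖ ≤ ∑' k, ‖trigCoeff h k‖ := by
  rw [← Finset.sum_image (f := fun k => ‖trigCoeff h k‖) he.injOn]
  exact (summable_norm_trigCoeff hh).sum_le_tsum _ fun _ _ => norm_nonneg _

lemma integral_mul_eq_zero_of_mem_trigPoly (hg : IntervalIntegrable g volume (-π) π)
    (hcoeff : ∀ k, trigCoeff g k = 0) (hh : h ∈ trigPoly) :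
    ∫ θ in (-π)..π, g θ * h θ = 0 := by
  have hgi {h : ℝ → ℂ} (hh : h ∈ trigPoly) :
      IntervalIntegrable (fun θ => g θ * h θ) volume (-π) π :=
    hg.mul_continuousOn (continuous_of_mem_trigPoly hh).continuousOn
  induction hh using Submodule.span_induction with
  | mem _ hx =>
    obtain ⟨r, rfl⟩ := hx
    have hpi : ((2 * π : ℝ) : ℂ)⁻¹ ≠ 0 := inv_ne_zero (mod_cast Real.two_pi_pos.ne')
    simpa only [trigCoeff, neg_neg, mul_eq_zero, hpi, false_or] using hcoeff (-r)
  | zero => simp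
  | add x y hxm hym hx hy =>
    simp only [Pi.add_apply, mul_add, intervalIntegral.integral_add (hgi hxm) (hgi hym), hx, hy,
      add_zero]
  | smul c _ _ hx =>
    simp only [Pi.smul_apply, mul_smul_comm, intervalIntegral.integral_smul, hx, smul_zero]

lemma integral_mul_eq_zero_of_trigCoeff_eq_zero (hg : IntervalIntegrable g volume (-π) π)
    (hcoeff : ∀ k, trigCoeff g k = 0) (hh : ContinuousOn h (Set.Icc (-π) π))
    (hper : h (-π) = h π) : ∫ θ in (-π)..π, g θ * h θ = 0 := by
  refine norm_le_zero_iff.1 (le_of_forall_pos_le_add fun ε hε => ?_)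
  set I := ∫ θ in (-π)..π, ‖g θ‖
  have hI : 0 ≤ I := intervalIntegral.integral_nonneg neg_pi_le_pi fun _ _ => norm_nonneg _
  obtain ⟨p, hp, hph⟩ := exists_mem_trigPoly_norm_sub_le hh hper
    (ε := ε / (I + 1)) (by positivity)
  have hgp := hg.mul_continuousOn (continuous_of_mem_trigPoly hp).continuousOn
  have hgh := hg.mul_continuousOn (hh.mono (Set.uIcc_of_le neg_pi_le_pi).le)
  have hsub : ∫ θ in (-π)..π, g θ * h θ = ∫ θ in (-π)..π, (g θ * h θ - g θ * p θ) := by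
    rw [intervalIntegral.integral_sub hgh hgp, integral_mul_eq_zero_of_mem_trigPoly hg hcoeff hp,
      sub_zero]
  calc ‖∫ θ in (-π)..π, g θ * h θ‖ ≤ ∫ θ in (-π)..π, ‖g θ‖ * (ε / (I + 1)) := by
        rw [hsub]
        refine intervalIntegral.norm_integral_le_of_norm_le neg_pi_le_pi
          (.of_forall fun θ hθ => ?_) (hg.norm.mul_const _)
        rw [← mul_sub, norm_mul]
        exact mul_le_mul_of_nonneg_left (hph θ hθ) (norm_nonneg _)
    _ = I * (ε / (I + 1)) := intervalIntegral.integral_mul_const _ _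
    _ ≤ 0 + ε := by
        rw [zero_add, ← mul_div_assoc, div_le_iff₀ (by positivity)]
        nlinarith

lemma ae_eq_zero_of_trigCoeff_eq_zero (hg : IntervalIntegrable g volume (-π) π)
    (hcoeff : ∀ k, trigCoeff g k = 0) : ∀ᵐ θ ∂volume.restrict (Set.Ioc (-π) π), g θ = 0 := by
  have hgon : IntegrableOn g (Set.Ioo (-π) π) :=
    ((intervalIntegrable_iff_integrableOn_Ioc_of_le neg_pi_le_pi).1 hg).mono_set
      Set.Ioo_subset_Ioc_self
  rw [← Measure.restrict_congr_set Ioo_ae_eq_Ioc, ae_restrict_iff' measurableSet_Ioo]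
  refine isOpen_Ioo.ae_eq_zero_of_integral_contDiff_smul_eq_zero hgon.locallyIntegrableOn
    fun φ hφ _ hsupp => ?_
  have hzero {x : ℝ} (hx : x ∉ Set.Ioo (-π) π) : φ x = 0 :=
    image_eq_zero_of_notMem_tsupport fun hxs => hx (hsupp hxs)
  have hintegral := integral_mul_eq_zero_of_trigCoeff_eq_zero hg hcoeff
    (h := fun θ => (φ θ : ℂ)) (Complex.continuous_ofReal.comp hφ.continuous).continuousOn
    (by rw [hzero (by simp), hzero (by simp)])
  rw [intervalIntegral.integral_of_le neg_pi_le_pi] at hintegral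
  rw [← hintegral, ← integral_indicator measurableSet_Ioc]
  refine integral_congr_ae (.of_forall fun θ => ?_)
  by_cases hθ : θ ∈ Set.Ioc (-π) π
  · simp only [Set.indicator_of_mem hθ, Complex.real_smul, mul_comm]
  · simp only [Set.indicator_of_notMem hθ,
      hzero fun hmem => hθ (Set.Ioo_subset_Ioc_self hmem), zero_smul]

end FourierCoefficients

section TraceNormIntegral

open scoped Matrix.Norms.L2Operator

variable {ι κ : Type*} [Fintype ι] [DecidableEq ι]

lemma TraceNormLE.smul {A : Matrix ι ι ℂ} {c : ℝ} (h : TraceNormLE A c) (z : ℂ) :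
    TraceNormLE (z • A) (‖z‖ * c) := by
  intro X hX
  rw [Matrix.mul_smul, trace_smul, norm_smul]
  exact mul_le_mul_of_nonneg_left (h X hX) (norm_nonneg z)

lemma TraceNormLE.integral {α : Type*} [MeasurableSpace α] {μ : Measure α}
    {A : α → Matrix ι ι ℂ} {c : α → ℝ} (h : ∀ x, TraceNormLE (A x) (c x))
    (hA : ∀ i j, Integrable (fun x => A x i j) μ) (hc : Integrable c μ) :
    TraceNormLE (of fun i j => ∫ x, A x i j ∂μ) (∫ x, c x ∂μ) := by
  intro X hX
  have htrace : (X * of fun i j => ∫ x, A x i j ∂μ).trace = ∫ x, (X * A x).trace ∂μ := calc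
    _ = ∑ i, ∑ j, X i j * ∫ x, A x j i ∂μ := rfl
    _ = ∑ i, ∑ j, ∫ x, X i j * A x j i ∂μ := by simp only [integral_const_mul]
    _ = ∑ i, ∫ x, ∑ j, X i j * A x j i ∂μ := Finset.sum_congr rfl fun i _ =>
      (integral_finsetSum _ fun j _ => (hA j i).const_mul _).symm
    _ = ∫ x, ∑ i, ∑ j, X i j * A x j i ∂μ := (integral_finsetSum _ fun i _ =>
      integrable_finsetSum _ fun j _ => (hA j i).const_mul _).symm
  rw [htrace]
  exact norm_integral_le_of_norm_le hc (.of_forall fun x => h x X hX)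

lemma TraceNormLE.sum {A : κ → Matrix ι ι ℂ} {c : κ → ℝ} (s : Finset κ)
    (h : ∀ k, TraceNormLE (A k) (c k)) : TraceNormLE (∑ k ∈ s, A k) (∑ k ∈ s, c k) := by
  intro X hX
  rw [Matrix.mul_sum, trace_sum]
  exact (norm_sum_le _ _).trans (Finset.sum_le_sum fun k _ => h k X hX)

lemma traceNormLE_vecMulVec {a b : ι → ℂ} (ha : ∀ i, ‖a i‖ ≤ 1) (hb : ∀ i, ‖b i‖ ≤ 1) :
    TraceNormLE (vecMulVec a b) (Fintype.card ι) := by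
  intro X hX
  rw [mul_vecMulVec, trace_vecMulVec, dotProduct_comm]
  exact norm_dotProduct_mulVec_le_card hX hb ha

lemma traceNormLE_submatrix [Fintype κ] (M : Matrix κ κ ℂ) (b : ι → κ) :
    TraceNormLE (M.submatrix b b) (Fintype.card ι * ∑ k, ∑ l, ‖M k l‖) := by
  classical
  let e (k : κ) (x : ι) : ℂ := if b x = k then 1 else 0
  have he (k x) : ‖e k x‖ ≤ 1 := by simp only [e]; split_ifs <;> simp
  have hM : M.submatrix b b = ∑ k, ∑ l, M k l • vecMulVec (e k) (e l) := by
    ext x y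
    simp only [submatrix_apply, Matrix.sum_apply, Matrix.smul_apply, vecMulVec_apply, e,
      smul_eq_mul, mul_ite, mul_one, mul_zero, Finset.sum_ite_eq, Finset.mem_univ, if_true]
  rw [hM]
  simp only [mul_comm (Fintype.card ι : ℝ), Finset.sum_mul]
  exact TraceNormLE.sum _ fun k => TraceNormLE.sum _ fun l =>
    (traceNormLE_vecMulVec (he k) (he l)).smul _

end TraceNormIntegral

section ToeplitzMatrices

variable {I J K : Type*}

/-- The Toeplitz-type matrix generated by a matrix-valued symbol `G` on an index set `I` whose
elements `x` carry a block label `b x` and an integer position `p x`. -/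
def indexedToeplitz (G : ℝ → Matrix K K ℂ) (b : I → K) (p : I → ℤ) : Matrix I I ℂ :=
  of fun x y => trigCoeff (fun θ => G θ (b x) (b y)) (p x - p y)

/-- The block matrix whose `(k, l)` block is the `ns k × ns l` Toeplitz matrix generated by the
scalar function `θ ↦ G θ k l`. -/
def sigmaToeplitz (G : ℝ → Matrix K K ℂ) (ns : K → ℕ) :
    Matrix ((k : K) × Fin (ns k)) ((k : K) × Fin (ns k)) ℂ :=
  indexedToeplitz G Sigma.fst fun x => ((x.2 : ℕ) : ℤ)

/-- The block matrix whose `(k, l)` block is `M k l` times the `mk k × mk l` matrix with ones on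
the main diagonal and zeros elsewhere. -/
def inflate (M : Matrix K K ℂ) (mk : K → ℕ) :
    Matrix ((k : K) × Fin (mk k)) ((k : K) × Fin (mk k)) ℂ :=
  of fun P Q => if (P.2 : ℕ) = Q.2 then M P.1 Q.1 else 0

lemma isHermitian_indexedToeplitz {G : ℝ → Matrix K K ℂ} (hG : ∀ θ, (G θ).IsHermitian)
    (b : I → K) (p : I → ℤ) : (indexedToeplitz G b p).IsHermitian := by
  refine IsHermitian.ext fun x y => ?_
  have hstar : (fun θ => G θ (b y) (b x)) = fun θ => star (G θ (b x) (b y)) :=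
    funext fun θ => ((hG θ).apply _ _).symm
  simp only [indexedToeplitz, of_apply, hstar, trigCoeff_star, star_star, neg_sub]

lemma indexedToeplitz_sub {G H : ℝ → Matrix K K ℂ}
    (hG : ∀ k l, IntervalIntegrable (fun θ => G θ k l) volume (-π) π)
    (hH : ∀ k l, IntervalIntegrable (fun θ => H θ k l) volume (-π) π) (b : I → K) (p : I → ℤ) :
    indexedToeplitz G b p - indexedToeplitz H b p =
      indexedToeplitz (fun θ => G θ - H θ) b p := by
  ext x y
  exact (trigCoeff_sub (hG _ _) (hH _ _) _).symm

lemma inflate_eq_sigmaToeplitz_const (M : Matrix K K ℂ) (mk : K → ℕ) :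
    inflate M mk = sigmaToeplitz (fun _ => M) mk := by
  ext P Q
  change (if (P.2 : ℕ) = Q.2 then M P.1 Q.1 else 0) = trigCoeff (fun _ => M P.1 Q.1) _
  simp only [trigCoeff_const, sub_eq_zero, Nat.cast_inj]

lemma isHermitian_inflate {M : Matrix K K ℂ} (hM : M.IsHermitian) (mk : K → ℕ) :
    (inflate M mk).IsHermitian := by
  rw [inflate_eq_sigmaToeplitz_const]
  exact isHermitian_indexedToeplitz (fun _ => hM) _ _

lemma inflate_sub (M N : Matrix K K ℂ) (mk : K → ℕ) :
    inflate M mk - inflate N mk = inflate (M - N) mk := by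
  simp only [inflate_eq_sigmaToeplitz_const]
  exact indexedToeplitz_sub (G := fun _ => M) (H := fun _ => N)
    (fun _ _ => intervalIntegrable_const) (fun _ _ => intervalIntegrable_const) _ _

variable [Fintype I] [DecidableEq I] [Fintype K]

open scoped Matrix.Norms.L2Operator in
lemma l2_opNorm_diagonal_trigMonomial_le (r : I → ℤ) (θ : ℝ) :
    ‖diagonal fun x => trigMonomial (r x) θ‖ ≤ 1 := by
  rw [l2_opNorm_diagonal]
  exact (pi_norm_le_iff_of_nonneg zero_le_one).2 fun x => (norm_trigMonomial _ _).le

lemma traceNormLE_indexedToeplitz {D : ℝ → Matrix K K ℂ}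
    (hD : ∀ k l, IntervalIntegrable (fun θ => D θ k l) volume (-π) π) (b : I → K) (p : I → ℤ) :
    TraceNormLE (indexedToeplitz D b p)
      (Fintype.card I * ((2 * π)⁻¹ * ∫ θ in (-π)..π, ∑ k, ∑ l, ‖D θ k l‖)) := by
  let A (θ : ℝ) : Matrix I I ℂ := (diagonal fun x => trigMonomial (-p x) θ) *
    ((D θ).submatrix b b * diagonal fun y => trigMonomial (p y) θ)
  have hA (θ x y) : A θ x y = D θ (b x) (b y) * trigMonomial (-(p x - p y)) θ := by
    simp only [A, diagonal_mul, mul_diagonal, submatrix_apply]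
    rw [mul_left_comm, trigMonomial_mul]
    ring_nf
  have htrace (θ : ℝ) : TraceNormLE (A θ) (Fintype.card I * ∑ k, ∑ l, ‖D θ k l‖) := by
    have h := traceNormLE_submatrix (D θ) b
    refine ((h.mul_right _).mul_left _).mono ?_
    refine (mul_le_of_le_one_left ((h.mul_right _).nonneg) ?_).trans
      (mul_le_of_le_one_left h.nonneg ?_) <;> exact l2_opNorm_diagonal_trigMonomial_le _ θ
  have hintegral := TraceNormLE.integral (μ := volume.restrict (Set.Ioc (-π) π)) htrace
    (fun x y => by
      simp only [hA]
      exact (intervalIntegrable_mul_trigMonomial (hD _ _) _).1)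
    ((integrable_finsetSum _ fun k _ => integrable_finsetSum _ fun l _ =>
      (hD k l).1.norm).const_mul _)
  convert hintegral.smul ((2 * π : ℝ) : ℂ)⁻¹ using 1
  · ext x y
    simp only [indexedToeplitz, trigCoeff, of_apply, Matrix.smul_apply, hA, smul_eq_mul,
      intervalIntegral.integral_of_le neg_pi_le_pi]
  · rw [norm_inv, Complex.norm_real, Real.norm_of_nonneg Real.two_pi_pos.le, integral_const_mul,
      intervalIntegral.integral_of_le neg_pi_le_pi]
    ring

lemma traceNormLE_inflate [DecidableEq K] (M : Matrix K K ℂ) (mk : K → ℕ) :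
    TraceNormLE (inflate M mk)
      (Fintype.card ((k : K) × Fin (mk k)) * ∑ k, ∑ l, ‖M k l‖) := by
  have h := traceNormLE_indexedToeplitz (D := fun _ => M)
    (fun _ _ => intervalIntegrable_const) Sigma.fst
    fun x : (k : K) × Fin (mk k) => ((x.2 : ℕ) : ℤ)
  rwa [intervalIntegral.integral_const, sub_neg_eq_add, ← two_mul, smul_eq_mul,
    inv_mul_cancel_left₀ Real.two_pi_pos.ne', ← sigmaToeplitz,
    ← inflate_eq_sigmaToeplitz_const] at h

end ToeplitzMatrices

section BlockCirculants

variable {κ : Type*}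

/-- The `j`-th point of the uniform grid with `N` nodes on `[0, 2π)`. -/
def gridPoint (N j : ℕ) : ℝ := 2 * π * j / N

/-- The `k`-th discrete Fourier coefficient of `h` on the uniform grid with `N` nodes. -/
def dftCoeff (h : ℝ → ℂ) (N : ℕ) (k : ℤ) : ℂ :=
  (N : ℂ)⁻¹ * ∑ j : Fin N, h (gridPoint N j) * trigMonomial (-k) (gridPoint N j)

/-- The matrix of the discrete Fourier transform on `N` points. -/
def dftMatrix (N : ℕ) : Matrix (Fin N) (Fin N) ℂ :=
  of fun p j => trigMonomial (-((p : ℕ) : ℤ)) (gridPoint N j)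

/-- The block circulant matrix whose eigenvalues are those of the samples of `S` on the uniform
grid with `N` nodes. -/
def blockCirculant (S : ℝ → Matrix κ κ ℂ) (N : ℕ) : Matrix (κ × Fin N) (κ × Fin N) ℂ :=
  of fun x y => dftCoeff (fun θ => S θ x.1 y.1) N ((x.2 : ℕ) - (y.2 : ℕ))

lemma trigMonomial_gridPoint (N j : ℕ) (k : ℤ) :
    trigMonomial k (gridPoint N j) = (Complex.exp (2 * π * Complex.I / N) ^ k) ^ j := by
  rw [← Complex.exp_int_mul, ← Complex.exp_nat_mul, trigMonomial, gridPoint]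
  push_cast
  ring_nf

lemma sum_trigMonomial_gridPoint {N : ℕ} (hN : 0 < N) (k : ℤ) :
    ∑ j : Fin N, trigMonomial k (gridPoint N j) = if (N : ℤ) ∣ k then (N : ℂ) else 0 := by
  have hprim := Complex.isPrimitiveRoot_exp N hN.ne'
  set ω := Complex.exp (2 * π * Complex.I / N)
  simp only [trigMonomial_gridPoint]
  rw [Fin.sum_univ_eq_sum_range (fun j => (ω ^ k) ^ j)]
  split_ifs with hk
  · rw [(hprim.zpow_eq_one_iff_dvd k).2 hk]
    simp
  · rw [geom_sum_eq (mt (hprim.zpow_eq_one_iff_dvd k).1 hk), ← zpow_natCast (ω ^ k), zpow_comm,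
      zpow_natCast, hprim.pow_eq_one, _root_.one_zpow, sub_self, zero_div]

lemma dftCoeff_add (g h : ℝ → ℂ) (N : ℕ) (k : ℤ) :
    dftCoeff (g + h) N k = dftCoeff g N k + dftCoeff h N k := by
  simp only [dftCoeff, ← mul_add, ← Finset.sum_add_distrib, Pi.add_apply, add_mul]

lemma dftCoeff_smul (c : ℂ) (h : ℝ → ℂ) (N : ℕ) (k : ℤ) :
    dftCoeff (c • h) N k = c * dftCoeff h N k := by
  simp only [dftCoeff, Pi.smul_apply, smul_eq_mul, Finset.mul_sum]
  exact Finset.sum_congr rfl fun j _ => by ring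

lemma dftCoeff_star (g : ℝ → ℂ) (N : ℕ) (k : ℤ) :
    dftCoeff (fun θ => star (g θ)) N k = star (dftCoeff g N (-k)) := by
  simp only [dftCoeff, star_mul', star_sum, star_inv₀, star_natCast, star_trigMonomial,
    neg_neg]

lemma dftCoeff_trigMonomial (r : ℤ) {N : ℕ} (hN : 0 < N) (k : ℤ) :
    dftCoeff (trigMonomial r) N k = if (N : ℤ) ∣ k - r then 1 else 0 := by
  have hN' : (N : ℂ) ≠ 0 := Nat.cast_ne_zero.2 hN.ne'
  simp only [dftCoeff, trigMonomial_mul, sum_trigMonomial_gridPoint hN, ← sub_eq_add_neg,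
    dvd_sub_comm (b := r), mul_ite, mul_zero, inv_mul_cancel₀ hN']

lemma isHermitian_blockCirculant {S : ℝ → Matrix κ κ ℂ} (hS : ∀ θ, (S θ).IsHermitian) (N : ℕ) :
    (blockCirculant S N).IsHermitian := by
  refine IsHermitian.ext fun x y => ?_
  have hstar : (fun θ => S θ y.1 x.1) = fun θ => star (S θ x.1 y.1) :=
    funext fun θ => ((hS θ).apply _ _).symm
  simp only [blockCirculant, of_apply, hstar, dftCoeff_star, star_star, neg_sub]

lemma dftMatrix_mul_conjTranspose {N : ℕ} (hN : 0 < N) :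
    dftMatrix N * ((N : ℂ)⁻¹ • (dftMatrix N)ᴴ) = 1 := by
  ext p q
  have h := dftCoeff_trigMonomial (q : ℕ) hN (p : ℕ)
  have hdvd : (N : ℤ) ∣ ((p : ℕ) : ℤ) - (q : ℕ) ↔ p = q := by
    refine ⟨fun hd => Fin.ext ?_, fun hpq => by simp [hpq]⟩
    have := Int.eq_zero_of_abs_lt_dvd hd (by rw [abs_lt]; omega)
    omega
  simp only [hdvd, dftCoeff] at h
  rw [one_apply, ← h, Matrix.mul_smul, Matrix.smul_apply, mul_apply, smul_eq_mul]
  simp only [dftMatrix, conjTranspose_apply, of_apply, star_trigMonomial, neg_neg, mul_comm]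

variable [Fintype κ] [DecidableEq κ]

open scoped Kronecker in
lemma blockCirculant_eq_mul_blockDiagonal_mul (S : ℝ → Matrix κ κ ℂ) (N : ℕ) :
    blockCirculant S N = ((1 : Matrix κ κ ℂ) ⊗ₖ dftMatrix N) *
      (blockDiagonal (fun j : Fin N => S (gridPoint N j)) *
        ((1 : Matrix κ κ ℂ) ⊗ₖ ((N : ℂ)⁻¹ • (dftMatrix N)ᴴ))) := by
  ext ⟨P, p⟩ ⟨Q, q⟩
  simp only [blockCirculant, dftCoeff, dftMatrix, mul_apply, of_apply, Fintype.sum_prod_type,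
    kroneckerMap_apply, one_apply, blockDiagonal_apply, Matrix.smul_apply, conjTranspose_apply,
    star_trigMonomial, neg_neg, ite_mul, mul_ite, one_mul, zero_mul, mul_zero,
    Finset.sum_ite_eq, Finset.sum_ite_eq', Finset.sum_ite_irrel, Finset.sum_const_zero,
    Finset.mem_univ, if_true, Finset.mul_sum, smul_eq_mul]
  refine Finset.sum_congr rfl fun j _ => ?_
  rw [neg_sub, sub_eq_neg_add, ← trigMonomial_mul]
  ring

open scoped Kronecker in
lemma eigSum_blockCirculant (F : ℂ → ℂ) (S : ℝ → Matrix κ κ ℂ) {N : ℕ} (hN : 0 < N) :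
    eigSum F (blockCirculant S N) = ∑ j : Fin N, eigSum F (S (gridPoint N j)) := by
  rw [blockCirculant_eq_mul_blockDiagonal_mul, eigSum_mul_comm, Matrix.mul_assoc,
    ← mul_kronecker_mul, Matrix.mul_one, mul_eq_one_comm.1 (dftMatrix_mul_conjTranspose hN),
    one_kronecker_one, Matrix.mul_one, eigSum_blockDiagonal]

end BlockCirculants

section Aliasing

/-- The difference between the entry `(u * N + p, v * N + q)` of the Toeplitz matrix generated by
`h` and the corresponding entry of the block diagonal matrix with circulant blocks of size `N`. -/
def aliasingError (h : ℝ → ℂ) (N u v : ℕ) (p q : Fin N) : ℂ :=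
  trigCoeff h ((u * N + p : ℕ) - (v * N + q : ℕ)) -
    if u = v then dftCoeff h N ((p : ℕ) - (q : ℕ)) else 0

lemma card_filter_dvd_sub_sub_le (r : ℤ) (N : ℕ) :
    ((Finset.univ.filter fun x : Fin N × Fin N =>
      (N : ℤ) ∣ (x.1 : ℕ) - (x.2 : ℕ) - r ∧ ((x.1 : ℕ) : ℤ) - (x.2 : ℕ) ≠ r).card : ℤ) ≤ |r| := by
  have hcard : (Finset.Ico 0 r ∪ Finset.Ico (N + r) N).card ≤ r.toNat + (-r).toNat := by
    refine (Finset.card_union_le _ _).trans ?_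
    rw [Int.card_Ico, Int.card_Ico]
    omega
  have hle : (r.toNat + (-r).toNat : ℕ) ≤ |r| := by rcases abs_cases r with h | h <;> omega
  refine le_trans (Nat.cast_le.2 (le_trans ?_ hcard)) hle
  refine Finset.card_le_card_of_injOn (fun x => ((x.1 : ℕ) : ℤ)) ?_ ?_
  · rintro ⟨p, q⟩ hpq
    obtain ⟨hdvd, hne⟩ : (N : ℤ) ∣ (p : ℕ) - (q : ℕ) - r ∧ ((p : ℕ) : ℤ) - (q : ℕ) ≠ r :=
      (Finset.mem_filter.1 hpq).2
    by_contra hout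
    simp only [Finset.coe_union, Finset.coe_Ico, Set.mem_union, Set.mem_Ico] at hout
    have := Int.eq_zero_of_abs_lt_dvd hdvd (by rw [abs_lt]; omega)
    omega
  · rintro ⟨p, q⟩ hpq ⟨p', q'⟩ hpq' (hp : ((p : ℕ) : ℤ) = (p' : ℕ))
    have hdvd : (N : ℤ) ∣ ((p : ℕ) - (q : ℕ) - r) - ((p' : ℕ) - (q' : ℕ) - r) := dvd_sub
      (Finset.mem_filter.1 hpq).2.1 (Finset.mem_filter.1 hpq').2.1
    have := Int.eq_zero_of_abs_lt_dvd hdvd (by rw [abs_lt]; omega)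
    obtain rfl : p = p' := Fin.ext (by omega)
    obtain rfl : q = q' := Fin.ext (by omega)
    rfl

lemma norm_aliasingError_trigMonomial_le (r : ℤ) {N : ℕ} (hN : 0 < N) (u v : ℕ) (p q : Fin N) :
    ‖aliasingError (trigMonomial r) N u v p q‖ ≤
      if (N : ℤ) ∣ (p : ℕ) - (q : ℕ) - r ∧ ((p : ℕ) : ℤ) - (q : ℕ) ≠ r then 1 else 0 := by
  rw [aliasingError, trigCoeff_trigMonomial, dftCoeff_trigMonomial r hN]
  rcases eq_or_ne u v with rfl | huv
  · have hpos : ((u * N + p : ℕ) : ℤ) - (u * N + q : ℕ) = (p : ℕ) - (q : ℕ) := by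
      push_cast; ring
    rw [hpos, if_pos rfl]
    by_cases hr : ((p : ℕ) : ℤ) - (q : ℕ) = r
    · simp [hr]
    · by_cases hdvd : (N : ℤ) ∣ (p : ℕ) - (q : ℕ) - r <;> simp [hr, hdvd]
  · rw [if_neg huv, sub_zero]
    by_cases hr : ((u * N + p : ℕ) : ℤ) - (v * N + q : ℕ) = r
    · have hpq : ((p : ℕ) : ℤ) - (q : ℕ) - r = N * (v - u) := by
        rw [← hr]; push_cast; ring
      have hne : ((p : ℕ) : ℤ) - (q : ℕ) ≠ r := by
        rw [← sub_ne_zero, hpq]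
        exact mul_ne_zero (by omega) (by omega)
      rw [if_pos hr, if_pos ⟨⟨_, hpq⟩, hne⟩, norm_one]
    · rw [if_neg hr, norm_zero]
      split_ifs <;> simp

lemma exists_sum_norm_aliasingError_le {h : ℝ → ℂ} (hh : h ∈ trigPoly) :
    ∃ C : ℝ, ∀ N, 0 < N → ∀ u v, ∑ p, ∑ q, ‖aliasingError h N u v p q‖ ≤ C := by
  induction hh using Submodule.span_induction with
  | mem x hx =>
    obtain ⟨r, rfl⟩ := hx
    refine ⟨|r|, fun N hN u v => ?_⟩
    refine (Finset.sum_le_sum fun p _ => Finset.sum_le_sum fun q _ =>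
      norm_aliasingError_trigMonomial_le r hN u v p q).trans ?_
    rw [← Fintype.sum_prod_type', Finset.sum_boole]
    exact_mod_cast card_filter_dvd_sub_sub_le r N
  | zero => exact ⟨0, fun N _ u v => by simp [aliasingError, trigCoeff_zero, dftCoeff]⟩
  | add x y hx hy ihx ihy =>
    obtain ⟨C, hC⟩ := ihx
    obtain ⟨D, hD⟩ := ihy
    refine ⟨C + D, fun N hN u v => le_trans ?_ (add_le_add (hC N hN u v) (hD N hN u v))⟩
    simp only [← Finset.sum_add_distrib]
    gcongr with p _ q _
    refine le_trans (le_of_eq ?_) (norm_add_le _ _)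
    rw [aliasingError, trigCoeff_add (intervalIntegrable_of_mem_trigPoly hx _ _)
      (intervalIntegrable_of_mem_trigPoly hy _ _), dftCoeff_add, aliasingError, aliasingError]
    congr 1
    split_ifs <;> ring
  | smul a x _ ihx =>
    obtain ⟨C, hC⟩ := ihx
    refine ⟨‖a‖ * C, fun N hN u v =>
      le_trans (le_of_eq ?_) (mul_le_mul_of_nonneg_left (hC N hN u v) (norm_nonneg a))⟩
    simp only [Finset.mul_sum, ← norm_mul, aliasingError, trigCoeff_smul, dftCoeff_smul, mul_sub,
      mul_ite, mul_zero]

end Aliasing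

section Compression

variable {ι : Type*}

/-- The matrix `A` with the rows and columns whose index violates `p` replaced by zeros. -/
def zeroOutside (p : ι → Prop) [DecidablePred p] (A : Matrix ι ι ℂ) : Matrix ι ι ℂ :=
  of fun x y => if p x ∧ p y then A x y else 0

lemma isHermitian_zeroOutside {A : Matrix ι ι ℂ} (hA : A.IsHermitian) (p : ι → Prop)
    [DecidablePred p] : (zeroOutside p A).IsHermitian :=
  IsHermitian.ext fun x y => by
    simp only [zeroOutside, of_apply, apply_ite star, star_zero, hA.apply, and_comm]

variable [Fintype ι]

lemma eigSum_submatrix_subtype [DecidableEq ι] (F : ℂ → ℂ) (p : ι → Prop) [DecidablePred p]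
    (A : Matrix ι ι ℂ) :
    eigSum F (A.submatrix (Subtype.val : {i // p i} → ι) Subtype.val) =
      eigSum F (zeroOutside p A) - Fintype.card {i // ¬ p i} * F 0 := by
  have hsub : A.submatrix (Subtype.val : {i // p i} → ι) Subtype.val =
      (zeroOutside p A).submatrix Subtype.val Subtype.val :=
    Matrix.ext fun x y => (if_pos ⟨x.2, y.2⟩).symm
  rw [eigSum_eq_eigSum_submatrix_add F p (zeroOutside p A) fun i j hij => if_neg hij, hsub,
    add_sub_cancel_right]

lemma sum_norm_sub_zeroOutside_le {A : Matrix ι ι ℂ} (hA : A.IsHermitian) (p : ι → Prop)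
    [DecidablePred p] {R : ℝ} (hR : ∀ x, ∑ y, ‖A x y‖ ≤ R) :
    ∑ x, ∑ y, ‖(A - zeroOutside p A) x y‖ ≤ Fintype.card {x // ¬ p x} * (2 * R) := by
  have hentry (x y) : ‖(A - zeroOutside p A) x y‖ ≤
      (if ¬ p x then ‖A x y‖ else 0) + if ¬ p y then ‖A y x‖ else 0 := by
    have hsymm : ‖A y x‖ = ‖A x y‖ := by rw [← hA.apply, norm_star]
    have := norm_nonneg (A x y)
    by_cases hx : p x <;> by_cases hy : p y <;>
      simp [zeroOutside, hx, hy, hsymm]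
  have hrows : ∑ x, ∑ y, (if ¬ p x then ‖A x y‖ else 0) ≤ Fintype.card {x // ¬ p x} * R := by
    rw [Fintype.card_subtype, ← nsmul_eq_mul]
    simp only [Finset.sum_ite_irrel, Finset.sum_const_zero]
    rw [← Finset.sum_filter]
    exact Finset.sum_le_card_nsmul _ _ _ fun x _ => hR x
  calc ∑ x, ∑ y, ‖(A - zeroOutside p A) x y‖
      ≤ ∑ x, ∑ y, ((if ¬ p x then ‖A x y‖ else 0) + if ¬ p y then ‖A y x‖ else 0) :=
        Finset.sum_le_sum fun x _ => Finset.sum_le_sum fun y _ => hentry x y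
    _ = (∑ x, ∑ y, if ¬ p x then ‖A x y‖ else 0) + ∑ y, ∑ x, if ¬ p y then ‖A y x‖ else 0 := by
        simp only [Finset.sum_add_distrib]
        rw [Finset.sum_comm (f := fun x y => if ¬ p y then ‖A y x‖ else 0)]
    _ ≤ Fintype.card {x // ¬ p x} * (2 * R) := by linarith

universe u

lemma exists_norm_eigSum_submatrix_sub_le {F : ℂ → ℂ} (hF : Continuous F)
    (hFc : HasCompactSupport F) {ε : ℝ} (hε : 0 < ε) :
    ∃ C : ℝ, 0 ≤ C ∧ ∀ {ι : Type u} [Fintype ι] [DecidableEq ι] {A B : Matrix ι ι ℂ},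
      A.IsHermitian → B.IsHermitian → ∀ (p : ι → Prop) [DecidablePred p] (R c : ℝ),
        (∀ x, ∑ y, ‖A x y‖ ≤ R) → TraceNormLE (A - B) c →
        ‖eigSum F (A.submatrix (Subtype.val : {i // p i} → ι) Subtype.val) - eigSum F B‖ ≤
          ε * Fintype.card ι + (C * c + C * (2 * R) * Fintype.card {i // ¬ p i} +
            ‖F 0‖ * Fintype.card {i // ¬ p i}) := by
  obtain ⟨C, hC, hle⟩ := exists_norm_eigSum_sub_le.{u} hF hFc hε
  refine ⟨C, hC, fun {ι} _ _ A B hA hB p _ R c hR hc => ?_⟩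
  have hzero : TraceNormLE (zeroOutside p A - B) (c + Fintype.card {i // ¬ p i} * (2 * R)) := by
    have h := (traceNormLE_sum_norm (A - zeroOutside p A)).mono
      (sum_norm_sub_zeroOutside_le hA p hR)
    have hsub : zeroOutside p A - B = A - B + -(A - zeroOutside p A) := by abel
    exact hsub ▸ hc.add h.neg
  have hbound := hle (isHermitian_zeroOutside hA p) hB _ hzero
  rw [eigSum_submatrix_subtype, sub_right_comm]
  refine (norm_sub_le _ _).trans ((add_le_add_left hbound _).trans (le_of_eq ?_))
  rw [norm_mul, Complex.norm_natCast]
  ring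

end Compression

section ToeplitzCirculant

variable {K : Type*} {mk ns : K → ℕ} {N : ℕ} {H : ℝ → Matrix K K ℂ}

/-- The position `u * N + p` in the `k`-th block of the `p`-th element of its `u`-th segment of
length `N`. -/
def segmentPos (x : ((k : K) × Fin (mk k)) × Fin N) : ℕ := (x.1.2 : ℕ) * N + x.2

/-- Division with remainder by `N` splits the `k`-th block, of size `ns k ≤ mk k * N`, into
segments of length `N`. -/
def segmentEquiv (hN : 0 < N) (hle : ∀ k, ns k ≤ mk k * N) :
    ((k : K) × Fin (ns k)) ≃
      {x : ((k : K) × Fin (mk k)) × Fin N // segmentPos x < ns x.1.1} where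
  toFun P := ⟨(⟨P.1, ⟨P.2 / N, (Nat.div_lt_iff_lt_mul hN).2 (P.2.2.trans_le (hle _))⟩⟩,
    ⟨P.2 % N, Nat.mod_lt _ hN⟩), by rw [segmentPos, Nat.div_add_mod']; exact P.2.2⟩
  invFun x := ⟨x.1.1.1, ⟨segmentPos x.1, x.2⟩⟩
  left_inv := by
    rintro ⟨k, p, hp⟩
    simp only [segmentPos, Nat.div_add_mod']
  right_inv := by
    rintro ⟨⟨⟨k, u, hu⟩, ⟨p, hp⟩⟩, hx⟩
    have hdiv : (u * N + p) / N = u := by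
      rw [mul_comm, Nat.mul_add_div hN, Nat.div_eq_of_lt hp, add_zero]
    have hmod : (u * N + p) % N = p := by rw [mul_comm, Nat.mul_add_mod, Nat.mod_eq_of_lt hp]
    simp only [segmentPos, hdiv, hmod]

lemma segmentPos_segmentEquiv (hN : 0 < N) (hle : ∀ k, ns k ≤ mk k * N)
    (P : (k : K) × Fin (ns k)) : segmentPos (segmentEquiv hN hle P).1 = P.2 :=
  Nat.div_add_mod' _ _

lemma card_segmentPos_ge [Fintype K] (hN : 0 < N) (hle : ∀ k, ns k ≤ mk k * N) :
    (Fintype.card {x : ((k : K) × Fin (mk k)) × Fin N // ¬ segmentPos x < ns x.1.1} : ℝ) =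
      ∑ k, ((mk k : ℝ) * N - ns k) := by
  have hgood := Fintype.card_congr (segmentEquiv hN hle)
  have hsum : ∑ k, ns k ≤ ∑ k, mk k * N := Finset.sum_le_sum fun k _ => hle k
  rw [Fintype.card_subtype_compl, ← hgood]
  simp only [Fintype.card_prod, Fintype.card_sigma, Fintype.card_fin, Finset.sum_mul]
  rw [Nat.cast_sub hsum, Finset.sum_sub_distrib]
  push_cast
  rfl

/-- The Toeplitz matrices of `sigmaToeplitz H` with block sizes `mk k * N`, indexed by segments of
length `N`. -/
def segmentToeplitz (H : ℝ → Matrix K K ℂ) (mk : K → ℕ) (N : ℕ) :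
    Matrix (((k : K) × Fin (mk k)) × Fin N) (((k : K) × Fin (mk k)) × Fin N) ℂ :=
  indexedToeplitz H (fun x => x.1.1) fun x => (segmentPos x : ℤ)

lemma segmentToeplitz_sub_blockCirculant_apply (H : ℝ → Matrix K K ℂ)
    (x y : ((k : K) × Fin (mk k)) × Fin N) :
    (segmentToeplitz H mk N - blockCirculant (fun θ => inflate (H θ) mk) N) x y =
      aliasingError (fun θ => H θ x.1.1 y.1.1) N x.1.2 y.1.2 x.2 y.2 := by
  simp only [segmentToeplitz, blockCirculant, inflate, indexedToeplitz, segmentPos, aliasingError,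
    Matrix.sub_apply, of_apply]
  congr 1
  split_ifs
  · rfl
  · simp [dftCoeff]

lemma eigSum_sigmaToeplitz [Fintype K] [DecidableEq K] (F : ℂ → ℂ) (H : ℝ → Matrix K K ℂ)
    (hN : 0 < N) (hle : ∀ k, ns k ≤ mk k * N) :
    eigSum F (sigmaToeplitz H ns) = eigSum F ((segmentToeplitz H mk N).submatrix
      (Subtype.val : {x // segmentPos x < ns x.1.1} → _) Subtype.val) := by
  rw [← eigSum_submatrix_equiv F (segmentEquiv hN hle)]
  congr 1
  ext P Q
  simp only [submatrix_apply, sigmaToeplitz, segmentToeplitz, indexedToeplitz, of_apply,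
    segmentPos_segmentEquiv]
  rfl

variable [Fintype K]

lemma exists_sum_norm_segmentToeplitz_sub_le (hH : ∀ k l, (fun θ => H θ k l) ∈ trigPoly)
    (mk : K → ℕ) : ∃ C : ℝ, ∀ N, 0 < N → ∑ x, ∑ y,
      ‖(segmentToeplitz H mk N - blockCirculant (fun θ => inflate (H θ) mk) N) x y‖ ≤ C := by
  choose C hC using fun k l => exists_sum_norm_aliasingError_le (hH k l)
  refine ⟨∑ P : (k : K) × Fin (mk k), ∑ Q : (k : K) × Fin (mk k), C P.1 Q.1, fun N hN => ?_⟩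
  simp only [segmentToeplitz_sub_blockCirculant_apply, Fintype.sum_prod_type]
  refine Finset.sum_le_sum fun P _ => ?_
  rw [Finset.sum_comm]
  exact Finset.sum_le_sum fun Q _ => hC P.1 Q.1 N hN P.2 Q.2

lemma exists_sum_norm_segmentToeplitz_le (hH : ∀ k l, (fun θ => H θ k l) ∈ trigPoly)
    (mk : K → ℕ) : ∃ R : ℝ, 0 ≤ R ∧ ∀ N x, ∑ y, ‖segmentToeplitz H mk N x y‖ ≤ R := by
  let S (P : (k : K) × Fin (mk k)) : ℝ :=
    ∑ Q : (k : K) × Fin (mk k), ∑' r, ‖trigCoeff (fun θ => H θ P.1 Q.1) r‖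
  have hS (P) : 0 ≤ S P := Finset.sum_nonneg fun Q _ => tsum_nonneg fun r => norm_nonneg _
  refine ⟨∑ P, S P, Finset.sum_nonneg fun P _ => hS P, fun N x => ?_⟩
  refine le_trans ?_ (Finset.single_le_sum (fun P _ => hS P) (Finset.mem_univ x.1))
  rw [Fintype.sum_prod_type]
  refine Finset.sum_le_sum fun Q _ => sum_norm_trigCoeff_le_tsum (hH x.1.1 Q.1) fun q q' hq => ?_
  simp only [segmentPos] at hq
  ext
  push_cast at hq
  omega

lemma exists_norm_eigSum_sigmaToeplitz_sub_sum_le [DecidableEq K]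
    (hHerm : ∀ θ, (H θ).IsHermitian)
    (hH : ∀ k l, (fun θ => H θ k l) ∈ trigPoly) (mk : K → ℕ) {F : ℂ → ℂ} (hF : Continuous F)
    (hFc : HasCompactSupport F) {ε : ℝ} (hε : 0 < ε) :
    ∃ C : ℝ, 0 ≤ C ∧ ∀ (N : ℕ) (ns : K → ℕ), 0 < N → (∀ k, ns k ≤ mk k * N) →
      ‖eigSum F (sigmaToeplitz H ns) - ∑ j : Fin N, eigSum F (inflate (H (gridPoint N j)) mk)‖ ≤
        ε * Fintype.card (((k : K) × Fin (mk k)) × Fin N) +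
          C * (1 + ∑ k, ((mk k : ℝ) * N - ns k)) := by
  obtain ⟨C, hC, hle⟩ := exists_norm_eigSum_submatrix_sub_le hF hFc hε
  obtain ⟨D, hD⟩ := exists_sum_norm_segmentToeplitz_sub_le hH mk
  obtain ⟨R, hR, hrow⟩ := exists_sum_norm_segmentToeplitz_le hH mk
  refine ⟨max (C * D) (C * (2 * R) + ‖F 0‖), le_max_of_le_right (by positivity),
    fun N ns hN hns => ?_⟩
  have h := hle (isHermitian_indexedToeplitz hHerm _ _)
    (isHermitian_blockCirculant (fun θ => isHermitian_inflate (hHerm θ) mk) N)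
    (fun x => segmentPos x < ns x.1.1) R D (hrow N) ((traceNormLE_sum_norm _).mono (hD N hN))
  rw [← segmentToeplitz, ← eigSum_sigmaToeplitz F H hN hns, eigSum_blockCirculant F _ hN,
    add_assoc, ← add_mul, card_segmentPos_ge hN hns] at h
  refine h.trans (add_le_add_right ?_ _)
  have hbad : 0 ≤ ∑ k, ((mk k : ℝ) * N - ns k) :=
    Finset.sum_nonneg fun k _ => sub_nonneg.2 (mod_cast hns k)
  rw [mul_add, mul_one]
  gcongr
  exacts [le_max_left _ _, le_max_right _ _]

end ToeplitzCirculant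

section RiemannSums

variable {g h : ℝ → ℂ}

lemma tendsto_of_forall_approx {α E : Type*} [SeminormedAddCommGroup E] {l : Filter α}
    {u : α → E} {a : E}
    (hu : ∀ ε > 0, ∃ (v : α → E) (b : E), Tendsto v l (𝓝 b) ∧ (∀ᶠ x in l, ‖u x - v x‖ ≤ ε) ∧
      ‖b - a‖ ≤ ε) : Tendsto u l (𝓝 a) := by
  refine Metric.tendsto_nhds.2 fun ε hε => ?_
  obtain ⟨v, b, hv, huv, hba⟩ := hu (ε / 4) (by positivity)
  filter_upwards [huv, Metric.tendsto_nhds.1 hv (ε / 4) (by positivity)] with x hux hvx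
  rw [← dist_eq_norm] at hux hba
  linarith [dist_triangle4 (u x) (v x) b a]

lemma norm_dftCoeff_le {ε : ℝ} (hg : ∀ θ, ‖g θ‖ ≤ ε) (N : ℕ) (k : ℤ) : ‖dftCoeff g N k‖ ≤ ε := by
  have hsum : ‖∑ j : Fin N, g (gridPoint N j) * trigMonomial (-k) (gridPoint N j)‖ ≤ N * ε := by
    refine (norm_sum_le_of_le (n := fun _ => ε) Finset.univ fun j _ => ?_).trans_eq (by simp)
    rw [norm_mul, norm_trigMonomial, mul_one]
    exact hg _
  rw [dftCoeff, norm_mul, norm_inv, Complex.norm_natCast]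
  exact inv_mul_le_of_le_mul₀ N.cast_nonneg ((norm_nonneg _).trans (hg 0)) hsum

lemma norm_trigCoeff_le {ε : ℝ} (hg : ∀ θ, ‖g θ‖ ≤ ε) (k : ℤ) : ‖trigCoeff g k‖ ≤ ε := by
  have hintegral : ‖∫ θ in (-π)..π, g θ * trigMonomial (-k) θ‖ ≤ ε * |π - -π| :=
    intervalIntegral.norm_integral_le_of_norm_le_const fun θ _ => by
      rw [norm_mul, norm_trigMonomial, mul_one]
      exact hg θ
  rw [sub_neg_eq_add, ← two_mul, abs_of_pos Real.two_pi_pos, mul_comm] at hintegral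
  rw [trigCoeff, norm_mul, norm_inv, Complex.norm_real, Real.norm_of_nonneg Real.two_pi_pos.le]
  exact inv_mul_le_of_le_mul₀ Real.two_pi_pos.le ((norm_nonneg _).trans (hg 0)) hintegral

lemma tendsto_dftCoeff_of_mem_trigPoly (hh : h ∈ trigPoly) (k : ℤ) :
    Tendsto (fun N => dftCoeff h N k) atTop (𝓝 (trigCoeff h k)) := by
  induction hh using Submodule.span_induction with
  | mem _ hx =>
    obtain ⟨r, rfl⟩ := hx
    refine tendsto_const_nhds.congr' ?_
    filter_upwards [eventually_gt_atTop (k - r).natAbs] with N hN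
    have hdvd : (N : ℤ) ∣ k - r ↔ k = r := by
      refine ⟨fun hd => sub_eq_zero.1 (Int.eq_zero_of_abs_lt_dvd hd ?_), fun hkr => by simp [hkr]⟩
      rw [Int.abs_eq_natAbs]
      exact_mod_cast hN
    rw [dftCoeff_trigMonomial r (Nat.zero_lt_of_lt hN), trigCoeff_trigMonomial]
    simp only [hdvd]
  | zero => simp [dftCoeff, trigCoeff_zero]
  | add x y hx hy ihx ihy =>
    rw [trigCoeff_add (intervalIntegrable_of_mem_trigPoly hx _ _)
      (intervalIntegrable_of_mem_trigPoly hy _ _)]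
    simpa only [dftCoeff_add] using ihx.add ihy
  | smul c x _ ihx =>
    rw [trigCoeff_smul]
    simpa only [dftCoeff_smul] using ihx.const_mul c

lemma exists_mem_trigPoly_forall_norm_sub_le (hg : Continuous g)
    (hper : Function.Periodic g (2 * π)) {ε : ℝ} (hε : 0 < ε) :
    ∃ h ∈ trigPoly, ∀ θ, ‖g θ - h θ‖ ≤ ε := by
  have hends : g (-π) = g π := by rw [← hper (-π), neg_pi_add_two_pi]
  obtain ⟨h, hh, hgh⟩ := exists_mem_trigPoly_norm_sub_le hg.continuousOn hends hε
  refine ⟨h, hh, fun θ => ?_⟩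
  obtain ⟨τ, hτ, hθτ⟩ := (hper.sub (periodic_of_mem_trigPoly hh)).exists_mem_Ioc
    Real.two_pi_pos θ (-π)
  rw [neg_pi_add_two_pi] at hτ
  simp only [Pi.sub_apply] at hθτ
  exact hθτ ▸ hgh τ hτ

lemma tendsto_dftCoeff (hg : Continuous g) (hper : Function.Periodic g (2 * π)) (k : ℤ) :
    Tendsto (fun N => dftCoeff g N k) atTop (𝓝 (trigCoeff g k)) := by
  refine tendsto_of_forall_approx fun ε hε => ?_
  obtain ⟨h, hh, hgh⟩ := exists_mem_trigPoly_forall_norm_sub_le hg hper hε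
  refine ⟨_, _, tendsto_dftCoeff_of_mem_trigPoly hh k, .of_forall fun N => ?_, ?_⟩
  · have hadd := dftCoeff_add h (g - h) N k
    rw [add_sub_cancel] at hadd
    rw [hadd, add_sub_cancel_left]
    exact norm_dftCoeff_le hgh N k
  · rw [norm_sub_rev, ← trigCoeff_sub (hg.intervalIntegrable _ _)
      (intervalIntegrable_of_mem_trigPoly hh _ _)]
    exact norm_trigCoeff_le hgh k

lemma setAverage_Icc_neg_pi_pi {E : Type*} [NormedAddCommGroup E] [NormedSpace ℝ E] (g : ℝ → E) :
    ⨍ θ in Set.Icc (-π) π, g θ = (2 * π)⁻¹ • ∫ θ in (-π)..π, g θ := by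
  rw [setAverage_eq, Real.volume_real_Icc_of_le neg_pi_le_pi, sub_neg_eq_add, ← two_mul,
    integral_Icc_eq_integral_Ioc, intervalIntegral.integral_of_le neg_pi_le_pi]

lemma tendsto_average_gridPoint (hg : Continuous g) (hper : Function.Periodic g (2 * π)) :
    Tendsto (fun N : ℕ => (N : ℂ)⁻¹ * ∑ j : Fin N, g (gridPoint N j)) atTop
      (𝓝 (⨍ θ in Set.Icc (-π) π, g θ)) := by
  rw [setAverage_Icc_neg_pi_pi, Complex.real_smul, Complex.ofReal_inv]
  simpa only [dftCoeff, trigCoeff, neg_zero, trigMonomial_zero, mul_one] using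
    tendsto_dftCoeff hg hper 0

end RiemannSums

section HermitianTrigonometricApproximation

variable {K : Type*} [Fintype K]

lemma sum_norm_sub_hermitianPart_le {A : Matrix K K ℂ} (hA : A.IsHermitian) (B : Matrix K K ℂ) :
    ∑ k, ∑ l, ‖(A - hermitianPart B) k l‖ ≤ ∑ k, ∑ l, ‖(A - B) k l‖ := by
  have hentry (k l) : ‖(A - hermitianPart B) k l‖ ≤
      2⁻¹ * (‖(A - B) k l‖ + ‖(A - B) l k‖) := by
    have hsplit : (A - hermitianPart B) k l = 2⁻¹ * ((A - B) k l + star ((A - B) l k)) := by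
      rw [Matrix.sub_apply, Matrix.sub_apply, Matrix.sub_apply, hermitianPart_apply, star_sub,
        hA.apply]
      ring
    rw [hsplit, norm_mul, norm_inv, RCLike.norm_ofNat, ← norm_star ((A - B) l k)]
    gcongr
    exact norm_add_le _ _
  calc
    _ ≤ ∑ k, ∑ l, 2⁻¹ * (‖(A - B) k l‖ + ‖(A - B) l k‖) :=
      Finset.sum_le_sum fun k _ => Finset.sum_le_sum fun l _ => hentry k l
    _ = 2⁻¹ * (∑ k, ∑ l, ‖(A - B) k l‖ + ∑ k, ∑ l, ‖(A - B) l k‖) := by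
      simp only [Finset.sum_add_distrib, ← Finset.mul_sum]
    _ = ∑ k, ∑ l, ‖(A - B) k l‖ := by
      rw [Finset.sum_comm (f := fun k l => ‖(A - B) l k‖)]
      ring

lemma hermitianPart_mem_trigPoly {κ : Type*} {H : ℝ → Matrix κ κ ℂ}
    (hH : ∀ k l, (fun θ => H θ k l) ∈ trigPoly) (k l : κ) :
    (fun θ => hermitianPart (H θ) k l) ∈ trigPoly :=
  trigPoly.smul_mem 2⁻¹ (trigPoly.add_mem (hH k l) (star_mem_trigPoly (hH l k)))

lemma intervalIntegrable_sum_norm {D : ℝ → Matrix K K ℂ} {a b : ℝ}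
    (hD : ∀ k l, IntervalIntegrable (fun θ => D θ k l) volume a b) :
    IntervalIntegrable (fun θ => ∑ k, ∑ l, ‖D θ k l‖) volume a b := by
  have hsum := IntervalIntegrable.sum Finset.univ fun k _ =>
    IntervalIntegrable.sum Finset.univ fun l _ => (hD k l).norm
  simpa only [Finset.sum_fn] using hsum

lemma exists_isHermitian_mem_trigPoly_integral_le {G : ℝ → Matrix K K ℂ}
    (hG : ∀ θ, (G θ).IsHermitian)
    (hGi : ∀ k l, IntervalIntegrable (fun θ => G θ k l) volume (-π) π) {ε : ℝ} (hε : 0 < ε) :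
    ∃ H : ℝ → Matrix K K ℂ, (∀ θ, (H θ).IsHermitian) ∧ (∀ k l, (fun θ => H θ k l) ∈ trigPoly) ∧
      ∫ θ in (-π)..π, ∑ k, ∑ l, ‖(G θ - H θ) k l‖ ≤ ε := by
  obtain ⟨δ, hδ, hδε⟩ := exists_pos_mul_lt hε (Fintype.card K * Fintype.card K)
  choose h hh hGh using fun k l => exists_mem_trigPoly_integral_norm_sub_lt (hGi k l) hδ
  let H (θ : ℝ) : Matrix K K ℂ := of fun k l => h k l θ
  have hH : ∀ k l, (fun θ => H θ k l) ∈ trigPoly := hh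
  have hsub (k l) : IntervalIntegrable (fun θ => (G θ - H θ) k l) volume (-π) π :=
    (hGi k l).sub (intervalIntegrable_of_mem_trigPoly (hH k l) _ _)
  have hsub' (k l) : IntervalIntegrable (fun θ => (G θ - hermitianPart (H θ)) k l) volume (-π) π :=
    (hGi k l).sub (intervalIntegrable_of_mem_trigPoly (hermitianPart_mem_trigPoly hH k l) _ _)
  refine ⟨fun θ => hermitianPart (H θ), fun θ => isHermitian_hermitianPart _,
    hermitianPart_mem_trigPoly hH, ?_⟩
  calc
    _ ≤ ∫ θ in (-π)..π, ∑ k, ∑ l, ‖(G θ - H θ) k l‖ :=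
      intervalIntegral.integral_mono neg_pi_le_pi (intervalIntegrable_sum_norm hsub')
        (intervalIntegrable_sum_norm hsub) fun θ => sum_norm_sub_hermitianPart_le (hG θ) _
    _ = ∑ k, ∑ l, ∫ θ in (-π)..π, ‖(G θ - H θ) k l‖ := by
      rw [intervalIntegral.integral_finsetSum fun k _ =>
        by simpa only [Finset.sum_fn] using IntervalIntegrable.sum _ fun l _ => (hsub k l).norm]
      exact Finset.sum_congr rfl fun k _ =>
        intervalIntegral.integral_finsetSum fun l _ => (hsub k l).norm
    _ ≤ ∑ _k : K, ∑ _l : K, δ :=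
      Finset.sum_le_sum fun k _ => Finset.sum_le_sum fun l _ => (hGh k l).le
    _ ≤ ε := by
      simp only [Finset.sum_const, Finset.card_univ, nsmul_eq_mul, ← mul_assoc]
      exact hδε.le

end HermitianTrigonometricApproximation

section EigenvalueDistribution

variable {K : Type*} [Fintype K] [DecidableEq K] {G H : ℝ → Matrix K K ℂ} {mk : K → ℕ} {F : ℂ → ℂ}

lemma integrable_eigSum_inflate {Ω : Type*} [MeasurableSpace Ω] {μ : Measure Ω}
    [IsFiniteMeasure μ] {G : Ω → Matrix K K ℂ} (hF : Continuous F) (hFc : HasCompactSupport F)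
    (hG : ∀ θ, (G θ).IsHermitian)
    (hGm : ∀ k l, AEStronglyMeasurable (fun θ => G θ k l) μ) (mk : K → ℕ) :
    Integrable (fun θ => eigSum F (inflate (G θ) mk)) μ := by
  refine integrable_eigSum_comp hF hFc (fun θ => isHermitian_inflate (hG θ) mk) fun P Q => ?_
  by_cases hPQ : (P.2 : ℕ) = Q.2
  · simpa only [inflate, of_apply, if_pos hPQ] using hGm P.1 Q.1
  · simpa only [inflate, of_apply, if_neg hPQ] using aestronglyMeasurable_const

lemma integrableOn_Icc_eigSum_inflate (hF : Continuous F) (hFc : HasCompactSupport F)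
    (hG : ∀ θ, (G θ).IsHermitian)
    (hGi : ∀ k l, IntervalIntegrable (fun θ => G θ k l) volume (-π) π) (mk : K → ℕ) :
    IntegrableOn (fun θ => eigSum F (inflate (G θ) mk)) (Set.Icc (-π) π) :=
  integrable_eigSum_inflate hF hFc hG (fun k l =>
    ((intervalIntegrable_iff_integrableOn_Icc_of_le neg_pi_le_pi).1 (hGi k l)).1) mk

lemma tendsto_average_eigSum_inflate_gridPoint (hF : Continuous F) (hFc : HasCompactSupport F)
    (hH : ∀ θ, (H θ).IsHermitian) (hHp : ∀ k l, (fun θ => H θ k l) ∈ trigPoly) (mk : K → ℕ) :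
    Tendsto (fun N : ℕ => (N : ℂ)⁻¹ * ∑ j : Fin N, eigSum F (inflate (H (gridPoint N j)) mk)) atTop
      (𝓝 (⨍ θ in Set.Icc (-π) π, eigSum F (inflate (H θ) mk))) := by
  have hcont : Continuous fun θ => eigSum F (inflate (H θ) mk) := by
    refine continuous_eigSum_comp (G := fun θ => inflate (H θ) mk) hF hFc
      (fun θ => isHermitian_inflate (hH θ) mk) (continuous_matrix fun P Q => ?_)
    by_cases hPQ : (P.2 : ℕ) = Q.2
    · simpa only [inflate, of_apply, if_pos hPQ] using continuous_of_mem_trigPoly (hHp P.1 Q.1)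
    · simpa only [inflate, of_apply, if_neg hPQ] using continuous_const
  have hper : Function.Periodic H (2 * π) := fun θ =>
    Matrix.ext fun k l => periodic_of_mem_trigPoly (hHp k l) θ
  exact tendsto_average_gridPoint (g := fun θ => eigSum F (inflate (H θ) mk)) hcont
    (hper.comp fun M => eigSum F (inflate M mk))

variable {α : Type*} {l : Filter α} {ns : α → K → ℕ} {N : α → ℕ}

lemma tendsto_eigSum_sigmaToeplitz_of_mem_trigPoly (hF : Continuous F) (hFc : HasCompactSupport F)
    (hH : ∀ θ, (H θ).IsHermitian) (hHp : ∀ k l, (fun θ => H θ k l) ∈ trigPoly)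
    (hN : Tendsto N l atTop) (hle : ∀ᶠ x in l, ∀ k, ns x k ≤ mk k * N x)
    (hns : ∀ k, Tendsto (fun x => (ns x k : ℝ) / N x) l (𝓝 (mk k))) :
    Tendsto (fun x => (N x : ℂ)⁻¹ * eigSum F (sigmaToeplitz H (ns x))) l
      (𝓝 (⨍ θ in Set.Icc (-π) π, eigSum F (inflate (H θ) mk))) := by
  refine tendsto_of_forall_approx fun ε hε => ⟨_, _,
    (tendsto_average_eigSum_inflate_gridPoint hF hFc hH hHp mk).comp hN, ?_, by simpa using hε.le⟩
  obtain ⟨δ, hδ, hδε⟩ := exists_pos_mul_lt hε (Fintype.card ((k : K) × Fin (mk k)))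
  obtain ⟨C, -, hC⟩ := exists_norm_eigSum_sigmaToeplitz_sub_sum_le hH hHp mk hF hFc hδ
  have hNinv : Tendsto (fun x => (N x : ℝ)⁻¹) l (𝓝 0) :=
    tendsto_inv_atTop_zero.comp (tendsto_natCast_atTop_atTop.comp hN)
  have hdefect : Tendsto (fun x => C * ((N x : ℝ)⁻¹ + ∑ k, (mk k - (ns x k : ℝ) / N x))) l
      (𝓝 0) := by
    have hsum := tendsto_finsetSum Finset.univ fun k _ => (hns k).const_sub (mk k : ℝ)
    simpa using (hNinv.add hsum).const_mul C
  have hsmall := (hdefect.const_add ((Fintype.card ((k : K) × Fin (mk k)) : ℝ) * δ))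
    |>.eventually_lt_const (by rwa [add_zero])
  filter_upwards [hsmall, hle, hN.eventually_gt_atTop 0] with x hx hlex hNx
  have hNx' : (0 : ℝ) < N x := mod_cast hNx
  rw [Function.comp_apply, ← mul_sub, norm_mul, norm_inv, Complex.norm_natCast,
    inv_mul_le_iff₀ hNx']
  refine (hC (N x) (ns x) hNx hlex).trans ((le_of_eq ?_).trans
    (mul_le_mul_of_nonneg_left hx.le hNx'.le))
  have hscale : (N x : ℝ) * ∑ k, (mk k - (ns x k : ℝ) / N x) =
      ∑ k, ((mk k : ℝ) * N x - ns x k) := by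
    rw [Finset.mul_sum]
    exact Finset.sum_congr rfl fun k _ => by field_simp
  rw [← hscale, Fintype.card_prod, Fintype.card_fin]
  push_cast
  field_simp

lemma norm_setAverage_sub_le {g h : ℝ → ℂ} {B : ℝ → ℝ} {a b : ℝ}
    (hg : IntegrableOn g (Set.Icc (-π) π)) (hh : IntegrableOn h (Set.Icc (-π) π))
    (hB : IntervalIntegrable B volume (-π) π) (hle : ∀ θ, ‖g θ - h θ‖ ≤ a + b * B θ) :
    ‖(⨍ θ in Set.Icc (-π) π, g θ) - ⨍ θ in Set.Icc (-π) π, h θ‖ ≤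
      a + b * ((2 * π)⁻¹ * ∫ θ in (-π)..π, B θ) := by
  rw [← intervalIntegrable_iff_integrableOn_Icc_of_le neg_pi_le_pi] at hg hh
  have hbound := intervalIntegral.norm_integral_le_of_norm_le neg_pi_le_pi
    (Eventually.of_forall fun θ _ => hle θ)
    (intervalIntegrable_const.add (hB.const_mul b))
  rw [intervalIntegral.integral_add intervalIntegrable_const (hB.const_mul b),
    intervalIntegral.integral_const, intervalIntegral.integral_const_mul] at hbound
  rw [setAverage_Icc_neg_pi_pi, setAverage_Icc_neg_pi_pi, ← smul_sub,
    ← intervalIntegral.integral_sub hg hh, norm_smul, Real.norm_of_nonneg (by positivity)]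
  refine (mul_le_mul_of_nonneg_left hbound (by positivity)).trans_eq ?_
  rw [smul_eq_mul]
  field_simp
  ring

lemma exists_norm_eigSum_sigmaToeplitz_sub_le (hF : Continuous F) (hFc : HasCompactSupport F)
    (hG : ∀ θ, (G θ).IsHermitian)
    (hGi : ∀ k l, IntervalIntegrable (fun θ => G θ k l) volume (-π) π) {ε : ℝ} (hε : 0 < ε) :
    ∃ H : ℝ → Matrix K K ℂ, (∀ θ, (H θ).IsHermitian) ∧ (∀ k l, (fun θ => H θ k l) ∈ trigPoly) ∧
      (∀ ns : K → ℕ, ‖eigSum F (sigmaToeplitz G ns) - eigSum F (sigmaToeplitz H ns)‖ ≤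
        ε * Fintype.card ((k : K) × Fin (ns k))) ∧
      ∀ ns : K → ℕ, ‖(⨍ θ in Set.Icc (-π) π, eigSum F (inflate (G θ) ns)) -
        ⨍ θ in Set.Icc (-π) π, eigSum F (inflate (H θ) ns)‖ ≤
          ε * Fintype.card ((k : K) × Fin (ns k)) := by
  obtain ⟨C, hC, hstable⟩ := exists_norm_eigSum_sub_le hF hFc (half_pos hε)
  obtain ⟨η, hη, hCη⟩ := exists_pos_mul_lt (half_pos hε) C
  obtain ⟨H, hH, hHp, hdist⟩ := exists_isHermitian_mem_trigPoly_integral_le hG hGi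
    (mul_pos Real.two_pi_pos hη)
  have hHi : ∀ k l, IntervalIntegrable (fun θ => H θ k l) volume (-π) π := fun k l =>
    intervalIntegrable_of_mem_trigPoly (hHp k l) _ _
  have hDi : ∀ k l, IntervalIntegrable (fun θ => (G θ - H θ) k l) volume (-π) π := fun k l =>
    (hGi k l).sub (hHi k l)
  have hmean : C * ((2 * π)⁻¹ * ∫ θ in (-π)..π, ∑ k, ∑ l, ‖(G θ - H θ) k l‖) ≤ ε / 2 :=
    (mul_le_mul_of_nonneg_left ((inv_mul_le_iff₀ Real.two_pi_pos).2 hdist) hC).trans hCη.le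
  have hsplit : ∀ d I : ℝ, 0 ≤ d → C * I ≤ ε / 2 → ε / 2 * d + C * (d * I) ≤ ε * d := by
    intro d I hd hI
    linarith [mul_le_mul_of_nonneg_left hI hd, mul_left_comm C d I]
  refine ⟨H, hH, hHp, fun ns => ?_, fun ns => ?_⟩
  · refine (hstable (isHermitian_indexedToeplitz hG _ _) (isHermitian_indexedToeplitz hH _ _) _
      ?_).trans (hsplit _ _ (Nat.cast_nonneg _) hmean)
    refine (indexedToeplitz_sub hGi hHi _ _).symm ▸ ?_
    exact traceNormLE_indexedToeplitz hDi _ _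
  · refine (norm_setAverage_sub_le (integrableOn_Icc_eigSum_inflate hF hFc hG hGi ns)
      (integrableOn_Icc_eigSum_inflate hF hFc hH hHi ns)
      (intervalIntegrable_sum_norm hDi) (a := ε / 2 * Fintype.card ((k : K) × Fin (ns k)))
      (b := C * Fintype.card ((k : K) × Fin (ns k))) fun θ => ?_).trans ?_
    · rw [mul_assoc]
      refine hstable (isHermitian_inflate (hG θ) ns) (isHermitian_inflate (hH θ) ns) _ ?_
      rw [inflate_sub]
      exact traceNormLE_inflate _ _
    · rw [mul_assoc]
      exact hsplit _ _ (Nat.cast_nonneg _) hmean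

lemma tendsto_eigSum_sigmaToeplitz_of_le_mul (hF : Continuous F) (hFc : HasCompactSupport F)
    (hG : ∀ θ, (G θ).IsHermitian)
    (hGi : ∀ k l, IntervalIntegrable (fun θ => G θ k l) volume (-π) π)
    (hN : Tendsto N l atTop) (hle : ∀ᶠ x in l, ∀ k, ns x k ≤ mk k * N x)
    (hns : ∀ k, Tendsto (fun x => (ns x k : ℝ) / N x) l (𝓝 (mk k))) :
    Tendsto (fun x => (N x : ℂ)⁻¹ * eigSum F (sigmaToeplitz G (ns x))) l
      (𝓝 (⨍ θ in Set.Icc (-π) π, eigSum F (inflate (G θ) mk))) := by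
  refine tendsto_of_forall_approx fun ε hε => ?_
  obtain ⟨δ, hδ, hδε⟩ := exists_pos_mul_lt hε (Fintype.card ((k : K) × Fin (mk k)))
  obtain ⟨H, hH, hHp, hToeplitz, haverage⟩ :=
    exists_norm_eigSum_sigmaToeplitz_sub_le hF hFc hG hGi hδ
  rw [mul_comm] at hδε
  refine ⟨_, _, tendsto_eigSum_sigmaToeplitz_of_mem_trigPoly hF hFc hH hHp hN hle hns, ?_, ?_⟩
  · filter_upwards [hle, hN.eventually_gt_atTop 0] with x hlex hNx
    have hNx' : (0 : ℝ) < N x := mod_cast hNx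
    have hcard : (Fintype.card ((k : K) × Fin (ns x k)) : ℝ) ≤
        N x * Fintype.card ((k : K) × Fin (mk k)) := by
      simp only [Fintype.card_sigma, Fintype.card_fin, mul_comm (N x : ℝ)]
      rw [← Nat.cast_mul, Finset.sum_mul]
      exact_mod_cast Finset.sum_le_sum fun k _ => hlex k
    rw [← mul_sub, norm_mul, norm_inv, Complex.norm_natCast, inv_mul_le_iff₀ hNx']
    calc
      _ ≤ δ * Fintype.card ((k : K) × Fin (ns x k)) := hToeplitz (ns x)
      _ ≤ δ * (N x * Fintype.card ((k : K) × Fin (mk k))) := by gcongr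
      _ = N x * (δ * Fintype.card ((k : K) × Fin (mk k))) := mul_left_comm _ _ _
      _ ≤ N x * ε := by gcongr
  · rw [norm_sub_rev]
    exact (haverage mk).trans hδε.le

end EigenvalueDistribution

section CommonSize

variable {α : Type*} {l : Filter α} {T : α → ℝ} {c : ℝ}

lemma tendsto_natCeil_mul_div {u : α → ℝ} (hT : Tendsto T l atTop) (hu : Tendsto u l (𝓝 c))
    (hc : 0 < c) : Tendsto (fun x => (⌈T x * u x⌉₊ : ℝ) / T x) l (𝓝 c) := by
  have hlim := (tendsto_nat_ceil_div_atTop (R := ℝ)).comp (hT.atTop_mul_pos hc hu) |>.mul hu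
  rw [one_mul] at hlim
  refine hlim.congr' ?_
  filter_upwards [hT.eventually_gt_atTop 0, hu.eventually_const_lt hc] with x hTx hux
  rw [Function.comp_apply]
  field_simp

lemma exists_common_size {J : Type*} [Finite J] {ns : α → J → ℕ} {a : J → ℕ}
    (hT : Tendsto T l atTop) (hc : 0 < c) (ha : ∀ j, 0 < a j)
    (hns : ∀ j, Tendsto (fun x => (ns x j : ℝ) / T x) l (𝓝 (a j * c))) :
    ∃ N : α → ℕ, Tendsto N l atTop ∧ (∀ᶠ x in l, ∀ j, ns x j ≤ a j * N x) ∧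
      Tendsto (fun x => (N x : ℝ) / T x) l (𝓝 c) := by
  have := Fintype.ofFinite J
  let excess (x : α) : ℝ := ∑ j, |ns x j / T x - a j * c|
  have hexcess : Tendsto excess l (𝓝 0) := by
    simpa using tendsto_finsetSum Finset.univ fun j _ => ((hns j).sub_const (a j * c)).abs
  have hu : Tendsto (fun x => c + excess x) l (𝓝 c) := by simpa using hexcess.const_add c
  have hN := tendsto_natCeil_mul_div hT hu hc
  refine ⟨fun x => ⌈T x * (c + excess x)⌉₊, ?_, ?_, hN⟩
  · exact tendsto_nat_ceil_atTop.comp (hT.atTop_mul_pos hc hu)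
  · filter_upwards [hT.eventually_gt_atTop 0] with x hTx j
    have hj : (ns x j : ℝ) / T x - a j * c ≤ excess x := (le_abs_self _).trans
      (Finset.single_le_sum (f := fun j => |(ns x j : ℝ) / T x - a j * c|)
        (fun j _ => abs_nonneg _) (Finset.mem_univ j))
    have haj : (1 : ℝ) ≤ a j := mod_cast ha j
    have hexcess_nonneg : 0 ≤ excess x := Finset.sum_nonneg fun j _ => abs_nonneg _
    have hratio : (ns x j : ℝ) / T x ≤ a j * (c + excess x) := by
      linarith [le_mul_of_one_le_left hexcess_nonneg haj]
    rify
    calc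
      (ns x j : ℝ) ≤ a j * (c + excess x) * T x := (div_le_iff₀ hTx).1 hratio
      _ = a j * (T x * (c + excess x)) := by ring
      _ ≤ a j * (⌈T x * (c + excess x)⌉₊ : ℝ) := by
        gcongr
        exact Nat.le_ceil _

end CommonSize

section SzegoTheorem

variable {K : Type*} {G : ℝ → Matrix K K ℂ}

lemma ae_isHermitian_of_trigCoeff [Finite K]
    (hGi : ∀ k l, IntervalIntegrable (fun θ => G θ k l) volume (-π) π)
    (hsymm : ∀ k l r, trigCoeff (fun θ => G θ k l) r = star (trigCoeff (fun θ => G θ l k) (-r))) :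
    ∀ᵐ θ ∂volume.restrict (Set.Ioc (-π) π), (G θ).IsHermitian := by
  have hentry : ∀ k l, ∀ᵐ θ ∂volume.restrict (Set.Ioc (-π) π), G θ k l - star (G θ l k) = 0 := by
    intro k l
    refine ae_eq_zero_of_trigCoeff_eq_zero ((hGi k l).sub (intervalIntegrable_star (hGi l k)))
      fun r => ?_
    rw [trigCoeff_sub (hGi k l) (intervalIntegrable_star (hGi l k)), trigCoeff_star, hsymm,
      sub_self]
  filter_upwards [ae_all_iff.2 fun k => ae_all_iff.2 (hentry k)] with θ hθ
  exact IsHermitian.ext fun k l => (sub_eq_zero.1 (hθ k l)).symm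

lemma trigCoeff_eq_star_of_isHermitian_sigmaToeplitz {ns : K → ℕ}
    (hns : (sigmaToeplitz G ns).IsHermitian) {k l : K} {r : ℤ} (hk : r.natAbs < ns k)
    (hl : r.natAbs < ns l) :
    trigCoeff (fun θ => G θ k l) r = star (trigCoeff (fun θ => G θ l k) (-r)) := by
  have hsymm : ∀ (p : Fin (ns k)) (q : Fin (ns l)), ((p : ℕ) : ℤ) - ((q : ℕ) : ℤ) = r →
      trigCoeff (fun θ => G θ k l) r = star (trigCoeff (fun θ => G θ l k) (-r)) := by
    rintro p q rfl
    rw [neg_sub]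
    exact (hns.apply ⟨k, p⟩ ⟨l, q⟩).symm
  rcases le_total 0 r with hr | hr
  · exact hsymm ⟨r.natAbs, hk⟩ ⟨0, by omega⟩ (by simpa using hr)
  · exact hsymm ⟨0, by omega⟩ ⟨r.natAbs, hl⟩ (by simpa [neg_eq_iff_eq_neg] using hr)

lemma ae_isHermitian_of_isHermitian_sigmaToeplitz [Finite K] {α : Type*} {l : Filter α} [l.NeBot]
    {ns : α → K → ℕ} (hGi : ∀ k l, IntervalIntegrable (fun θ => G θ k l) volume (-π) π)
    (hns : ∀ k, Tendsto (fun x => ns x k) l atTop)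
    (hG : ∀ x, (sigmaToeplitz G (ns x)).IsHermitian) :
    ∀ᵐ θ ∂volume.restrict (Set.Ioc (-π) π), (G θ).IsHermitian := by
  refine ae_isHermitian_of_trigCoeff hGi fun k j r => ?_
  obtain ⟨x, hk, hj⟩ := (((hns k).eventually_gt_atTop r.natAbs).and
    ((hns j).eventually_gt_atTop r.natAbs)).exists
  exact trigCoeff_eq_star_of_isHermitian_sigmaToeplitz (hG x) hk hj

variable [Fintype K] [DecidableEq K] {mk : K → ℕ} {F : ℂ → ℂ} {α : Type*} {l : Filter α}
  {ns : α → K → ℕ} {T : α → ℝ} {c : ℝ}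

lemma tendsto_eigSum_sigmaToeplitz_of_isHermitian (hF : Continuous F) (hFc : HasCompactSupport F)
    (hG : ∀ θ, (G θ).IsHermitian)
    (hGi : ∀ k l, IntervalIntegrable (fun θ => G θ k l) volume (-π) π)
    (hT : Tendsto T l atTop) (hc : 0 < c) (hmk : ∀ k, 0 < mk k)
    (hns : ∀ k, Tendsto (fun x => (ns x k : ℝ) / T x) l (𝓝 (mk k * c))) :
    Tendsto (fun x => (T x : ℂ)⁻¹ * eigSum F (sigmaToeplitz G (ns x))) l
      (𝓝 (c * ⨍ θ in Set.Icc (-π) π, eigSum F (inflate (G θ) mk))) := by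
  obtain ⟨N, hN, hle, hNT⟩ := exists_common_size hT hc hmk hns
  have hnsN : ∀ k, Tendsto (fun x => (ns x k : ℝ) / N x) l (𝓝 (mk k)) := by
    intro k
    have hlim := (hns k).div hNT hc.ne'
    rw [mul_div_cancel_right₀ _ hc.ne'] at hlim
    refine hlim.congr' ?_
    filter_upwards [hT.eventually_ne_atTop 0] with x hTx
    exact div_div_div_cancel_right₀ hTx _ _
  have hNT' : Tendsto (fun x => (N x : ℂ) / T x) l (𝓝 c) := by
    simpa [Function.comp_def] using (Complex.continuous_ofReal.tendsto c).comp hNT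
  refine (hNT'.mul (tendsto_eigSum_sigmaToeplitz_of_le_mul hF hFc hG hGi hN hle hnsN)).congr' ?_
  filter_upwards [hN.eventually_ne_atTop 0] with x hNx
  have hNx' : (N x : ℂ) ≠ 0 := mod_cast hNx
  field_simp

lemma tendsto_eigSum_sigmaToeplitz (hF : Continuous F) (hFc : HasCompactSupport F)
    (hG : ∀ᵐ θ ∂volume.restrict (Set.Ioc (-π) π), (G θ).IsHermitian)
    (hGi : ∀ k l, IntervalIntegrable (fun θ => G θ k l) volume (-π) π)
    (hT : Tendsto T l atTop) (hc : 0 < c) (hmk : ∀ k, 0 < mk k)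
    (hns : ∀ k, Tendsto (fun x => (ns x k : ℝ) / T x) l (𝓝 (mk k * c))) :
    Tendsto (fun x => (T x : ℂ)⁻¹ * eigSum F (sigmaToeplitz G (ns x))) l
      (𝓝 (c * ⨍ θ in Set.Icc (-π) π, eigSum F (inflate (G θ) mk))) := by
  have hae : G =ᵐ[volume.restrict (Set.Ioc (-π) π)] fun θ => hermitianPart (G θ) :=
    hG.mono fun θ hθ => (hermitianPart_eq_self hθ).symm
  have hentry (k l) : (fun θ => G θ k l) =ᵐ[volume.restrict (Set.Ioc (-π) π)]
      fun θ => hermitianPart (G θ) k l := hae.mono fun θ hθ => congrFun₂ hθ k l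
  have hHi : ∀ k l, IntervalIntegrable (fun θ => hermitianPart (G θ) k l) volume (-π) π :=
    fun k l => (hGi k l).congr_ae (by rw [Set.uIoc_of_le neg_pi_le_pi]; exact hentry k l)
  have hToeplitz (x) : sigmaToeplitz (fun θ => hermitianPart (G θ)) (ns x) =
      sigmaToeplitz G (ns x) := Matrix.ext fun P Q => (trigCoeff_congr_ae (hentry _ _) _).symm
  have haverage : ⨍ θ in Set.Icc (-π) π, eigSum F (inflate (G θ) mk) =
      ⨍ θ in Set.Icc (-π) π, eigSum F (inflate (hermitianPart (G θ)) mk) := by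
    rw [← setAverage_congr Ioc_ae_eq_Icc, ← setAverage_congr Ioc_ae_eq_Icc]
    exact average_congr (hae.mono fun θ hθ => congrArg (fun M => eigSum F (inflate M mk)) hθ)
  rw [haverage]
  simpa only [hToeplitz] using tendsto_eigSum_sigmaToeplitz_of_isHermitian hF hFc
    (fun θ => isHermitian_hermitianPart (G θ)) hHi hT hc hmk hns

end SzegoTheorem

section BlockMatrices

variable {ν s t : ℕ}

/-- The symbol with the scalar entries of the blocks `f i j`, a row being labelled by its block row
and its row within that block, and similarly for columns. -/
def entrySymbol (f : Fin ν → Fin ν → ℝ → Matrix (Fin s) (Fin t) ℂ) (θ : ℝ) :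
    Matrix (Fin ν × Fin s) (Fin ν × Fin t) ℂ :=
  of fun p q => f p.1 q.1 θ p.2 q.2

/-- Regroups the rows of `blockMat` by their block row and row within an entry `f i j`. -/
def blockEquiv (s : ℕ) (ns : Fin ν → ℕ) :
    (i : Fin ν) × (Fin (ns i) × Fin s) ≃ (k : Fin ν × Fin s) × Fin (ns k.1) where
  toFun P := ⟨(P.1, P.2.2), P.2.1⟩
  invFun Q := ⟨Q.1.1, (Q.2, Q.1.2)⟩
  left_inv _ := rfl
  right_inv _ := rfl

/-- The Toeplitz sizes attached to the rows and to the columns of `entrySymbol f`. -/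
def dilationSizes (s t : ℕ) (ns : Fin ν → ℕ) : (Fin ν × Fin s) ⊕ (Fin ν × Fin t) → ℕ :=
  Sum.elim (fun p => ns p.1) fun q => ns q.1

/-- `blockEquiv` on the rows and on the columns simultaneously. -/
def dilationEquiv (s t : ℕ) (ns : Fin ν → ℕ) :
    ((i : Fin ν) × (Fin (ns i) × Fin s)) ⊕ ((i : Fin ν) × (Fin (ns i) × Fin t)) ≃
      (k : (Fin ν × Fin s) ⊕ (Fin ν × Fin t)) × Fin (dilationSizes s t ns k) :=
  (Equiv.sumCongr (blockEquiv s ns) (blockEquiv t ns)).trans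
    (Equiv.sumSigmaDistrib fun k => Fin (dilationSizes s t ns k)).symm

lemma card_blockIndex (s : ℕ) (ns : Fin ν → ℕ) :
    Fintype.card ((i : Fin ν) × (Fin (ns i) × Fin s)) = (∑ i, ns i) * s := by
  simp only [Fintype.card_sigma, Fintype.card_prod, Fintype.card_fin, Finset.sum_mul]

lemma blockMat_const (f : Fin ν → Fin ν → ℝ → Matrix (Fin s) (Fin t) ℂ) (mj : Fin ν → ℕ) (θ : ℝ) :
    blockMat ν s t (fun i j _ => f i j θ) mj = generalSymbol ν s t f mj θ := by
  ext P Q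
  simp only [blockMat, generalSymbol, of_apply, fCoeff_apply, trigCoeff_const, sub_eq_zero,
    Nat.cast_inj]

lemma submatrix_sigmaToeplitz_entrySymbol (f : Fin ν → Fin ν → ℝ → Matrix (Fin s) (Fin s) ℂ)
    (ns : Fin ν → ℕ) :
    (sigmaToeplitz (entrySymbol f) fun k => ns k.1).submatrix (blockEquiv s ns) (blockEquiv s ns) =
      blockMat ν s s f ns := by
  ext P Q
  exact (fCoeff_apply _ _ _ _).symm

lemma submatrix_sigmaToeplitz_hermitianDilation
    (f : Fin ν → Fin ν → ℝ → Matrix (Fin s) (Fin t) ℂ) (ns : Fin ν → ℕ) :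
    (sigmaToeplitz (fun θ => hermitianDilation (entrySymbol f θ)) (dilationSizes s t ns)).submatrix
      (dilationEquiv s t ns) (dilationEquiv s t ns) = hermitianDilation (blockMat ν s t f ns) := by
  ext (P | P) (Q | Q)
  · exact trigCoeff_zero _
  · exact (fCoeff_apply _ _ _ _).symm
  · refine (trigCoeff_star _ _).trans (congrArg star ?_)
    rw [neg_sub]
    exact (fCoeff_apply _ _ _ _).symm
  · exact trigCoeff_zero _

lemma eigSum_blockMat (F : ℂ → ℂ) (f : Fin ν → Fin ν → ℝ → Matrix (Fin s) (Fin s) ℂ)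
    (ns : Fin ν → ℕ) :
    eigSum F (blockMat ν s s f ns) = eigSum F (sigmaToeplitz (entrySymbol f) fun k => ns k.1) := by
  rw [← submatrix_sigmaToeplitz_entrySymbol, eigSum_submatrix_equiv]

lemma eigSum_generalSymbol (F : ℂ → ℂ) (f : Fin ν → Fin ν → ℝ → Matrix (Fin s) (Fin s) ℂ)
    (mj : Fin ν → ℕ) (θ : ℝ) :
    eigSum F (generalSymbol ν s s f mj θ) =
      eigSum F (inflate (entrySymbol f θ) fun k => mj k.1) := by
  rw [← blockMat_const, eigSum_blockMat, inflate_eq_sigmaToeplitz_const]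
  rfl

-- The subtracted term removes the superfluous zero eigenvalues of the dilation.
lemma inv_card_mul_svSum (φ : ℝ → ℂ) {ns : Fin ν → ℕ} (hns : ∑ i, ns i ≠ 0)
    (A : Matrix ((i : Fin ν) × (Fin (ns i) × Fin s)) ((i : Fin ν) × (Fin (ns i) × Fin t)) ℂ) :
    ((min (Fintype.card ((i : Fin ν) × (Fin (ns i) × Fin s)))
        (Fintype.card ((i : Fin ν) × (Fin (ns i) × Fin t))) : ℕ) : ℂ)⁻¹ * svSum φ A =
      (2 * (min s t : ℕ) : ℂ)⁻¹ * (((∑ i, ns i : ℕ) : ℂ)⁻¹ *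
        eigSum (fun z => φ ‖z‖) (hermitianDilation A) - (s + t - 2 * (min s t : ℕ)) * φ 0) := by
  have hns' : ((∑ i, ns i : ℕ) : ℂ) ≠ 0 := mod_cast hns
  rw [eigSum_hermitianDilation, card_blockIndex, card_blockIndex, Nat.mul_min_mul_left]
  generalize (∑ i, ns i) = n at hns' ⊢
  rcases eq_or_ne ((min s t : ℕ) : ℂ) 0 with hmin | hmin
  · simp only [Nat.cast_mul, hmin, mul_zero, _root_.inv_zero, zero_mul]
  · rw [Nat.cast_add, Nat.cast_mul, Nat.cast_mul, Nat.cast_mul]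
    field_simp
    ring

lemma eigSum_hermitianDilation_blockMat (F : ℂ → ℂ)
    (f : Fin ν → Fin ν → ℝ → Matrix (Fin s) (Fin t) ℂ) (ns : Fin ν → ℕ) :
    eigSum F (hermitianDilation (blockMat ν s t f ns)) =
      eigSum F (sigmaToeplitz (fun θ => hermitianDilation (entrySymbol f θ))
        (dilationSizes s t ns)) := by
  rw [← submatrix_sigmaToeplitz_hermitianDilation, eigSum_submatrix_equiv]

lemma eigSum_hermitianDilation_generalSymbol (F : ℂ → ℂ)
    (f : Fin ν → Fin ν → ℝ → Matrix (Fin s) (Fin t) ℂ) (mj : Fin ν → ℕ) (θ : ℝ) :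
    eigSum F (hermitianDilation (generalSymbol ν s t f mj θ)) =
      eigSum F (inflate (hermitianDilation (entrySymbol f θ)) (dilationSizes s t mj)) := by
  rw [← blockMat_const, eigSum_hermitianDilation_blockMat, inflate_eq_sigmaToeplitz_const]
  rfl

lemma intervalIntegrable_hermitianDilation_apply {ι κ : Type*} {A : ℝ → Matrix ι κ ℂ} {a b : ℝ}
    (hA : ∀ i j, IntervalIntegrable (fun θ => A θ i j) volume a b) (k l : ι ⊕ κ) :
    IntervalIntegrable (fun θ => hermitianDilation (A θ) k l) volume a b := by
  rcases k with i | i <;> rcases l with j | j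
  exacts [intervalIntegrable_const, hA i j, intervalIntegrable_star (hA j i),
    intervalIntegrable_const]

end BlockMatrices

section BlockMatrixDistribution

variable {ν s t m : ℕ} {mj : Fin ν → ℕ} {nsz : ℕ → Fin ν → ℕ}

lemma hasCompactSupport_comp_norm {E β : Type*} [NormedAddCommGroup E] [ProperSpace E] [Zero β]
    {φ : ℝ → β} (hφ : HasCompactSupport φ) : HasCompactSupport fun z : E => φ ‖z‖ := by
  obtain ⟨R, hR⟩ := hφ.isCompact.isBounded.subset_closedBall 0
  refine .of_support_subset_isCompact (isCompact_closedBall 0 R) fun z hz => ?_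
  simpa using hR (subset_tsupport φ hz)

lemma inv_volume_mul_setIntegral (Ω : Set ℝ) (g : ℝ → ℂ) :
    ((volume Ω).toReal : ℂ)⁻¹ * ∫ θ in Ω, g θ = ⨍ θ in Ω, g θ := by
  rw [setAverage_eq, Complex.real_smul, Complex.ofReal_inv, measureReal_def]

lemma setAverage_const_mul (Ω : Set ℝ) (a : ℂ) (g : ℝ → ℂ) :
    ⨍ θ in Ω, a * g θ = a * ⨍ θ in Ω, g θ := by
  rw [average, average, integral_const_mul]

lemma setAverage_sub_const {g : ℝ → ℂ} (hg : IntegrableOn g (Set.Icc (-π) π)) (c : ℂ) :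
    ⨍ θ in Set.Icc (-π) π, (g θ - c) = (⨍ θ in Set.Icc (-π) π, g θ) - c := by
  have hIcc : volume (Set.Icc (-π) π) ≠ 0 := by simp [Real.volume_Icc, Real.pi_pos]
  rw [average, integral_sub (hg.to_average) (integrable_const c)]
  exact congrArg _ (setAverage_const hIcc measure_Icc_lt_top.ne c)

lemma tendsto_atTop_of_tendsto_div {α : Type*} {l : Filter α} {a : α → ℕ} {T : α → ℝ} {c : ℝ}
    (hT : Tendsto T l atTop) (hc : 0 < c) (ha : Tendsto (fun x => (a x : ℝ) / T x) l (𝓝 c)) :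
    Tendsto a l atTop := by
  rw [← tendsto_natCast_atTop_iff (R := ℝ)]
  refine (ha.pos_mul_atTop hc hT).congr' ?_
  filter_upwards [hT.eventually_ne_atTop 0] with x hTx
  exact div_mul_cancel₀ _ hTx

theorem distributedSV_blockMat (hm : 0 < m) (hmj : ∀ j, 0 < mj j) (hmsum : ∑ j, mj j = m)
    {f : Fin ν → Fin ν → ℝ → Matrix (Fin s) (Fin t) ℂ}
    (hf : ∀ i j a b, IntervalIntegrable (fun θ => f i j θ a b) volume (-π) π)
    (htot : Tendsto (fun n => ∑ i, nsz n i) atTop atTop)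
    (hratio : ∀ j, Tendsto (fun n => (nsz n j : ℝ) / ((∑ i, nsz n i : ℕ) : ℝ))
      atTop (𝓝 ((mj j : ℝ) / (m : ℝ)))) :
    DistributedSV (Set.Icc (-π) π) (generalSymbol ν s t f mj)
      (fun n => blockMat ν s t f (nsz n)) := by
  intro φ hφ hφc
  let G (θ : ℝ) := hermitianDilation (entrySymbol f θ)
  have hG (θ) : (G θ).IsHermitian := isHermitian_hermitianDilation _
  have hGi := intervalIntegrable_hermitianDilation_apply (A := entrySymbol f) (a := -π) (b := π)
    fun p q => hf p.1 q.1 p.2 q.2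
  have hΦ : Continuous fun z : ℂ => φ ‖z‖ := hφ.comp continuous_norm
  have hΦc : HasCompactSupport fun z : ℂ => φ ‖z‖ := hasCompactSupport_comp_norm hφc
  have hT : Tendsto (fun n => ((∑ i, nsz n i : ℕ) : ℝ)) atTop atTop :=
    tendsto_natCast_atTop_atTop.comp htot
  have hszego := tendsto_eigSum_sigmaToeplitz_of_isHermitian (mk := dilationSizes s t mj)
    (ns := fun n => dilationSizes s t (nsz n)) (c := (m : ℝ)⁻¹) hΦ hΦc hG hGi hT (by positivity)
    (by rintro (k | k) <;> exact hmj _) (by rintro (k | k) <;> exact hratio _)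
  have hintegral : IntegrableOn (fun θ => eigSum (fun z => φ ‖z‖) (inflate (G θ)
      (dilationSizes s t mj))) (Set.Icc (-π) π) :=
    integrableOn_Icc_eigSum_inflate hΦ hΦc hG hGi _
  simp only [inv_volume_mul_setIntegral, inv_card_mul_svSum φ (hmsum ▸ hm.ne'),
    eigSum_hermitianDilation_generalSymbol, hmsum]
  rw [setAverage_const_mul, setAverage_sub_const (hintegral.const_mul _), setAverage_const_mul]
  simp only [Complex.ofReal_inv, Complex.ofReal_natCast] at hszego
  refine ((hszego.sub_const _).const_mul _).congr' ?_
  filter_upwards [htot.eventually_ne_atTop 0] with n hn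
  rw [inv_card_mul_svSum φ hn, eigSum_hermitianDilation_blockMat]

theorem distributedEig_blockMat (hm : 0 < m) (hmj : ∀ j, 0 < mj j) (hmsum : ∑ j, mj j = m)
    {f : Fin ν → Fin ν → ℝ → Matrix (Fin s) (Fin s) ℂ}
    (hf : ∀ i j a b, IntervalIntegrable (fun θ => f i j θ a b) volume (-π) π)
    (htot : Tendsto (fun n => ∑ i, nsz n i) atTop atTop)
    (hratio : ∀ j, Tendsto (fun n => (nsz n j : ℝ) / ((∑ i, nsz n i : ℕ) : ℝ))
      atTop (𝓝 ((mj j : ℝ) / (m : ℝ))))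
    (hA : ∀ n, (blockMat ν s s f (nsz n)).IsHermitian) :
    DistributedEig (Set.Icc (-π) π) (generalSymbol ν s s f mj)
      (fun n => blockMat ν s s f (nsz n)) := by
  intro F hF hFc
  have hT : Tendsto (fun n => ((∑ i, nsz n i : ℕ) : ℝ)) atTop atTop :=
    tendsto_natCast_atTop_atTop.comp htot
  have hGi : ∀ p q, IntervalIntegrable (fun θ => entrySymbol f θ p q) volume (-π) π :=
    fun p q => hf p.1 q.1 p.2 q.2
  have hHerm (n) : (sigmaToeplitz (entrySymbol f) fun k => nsz n k.1).IsHermitian := by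
    rw [← isHermitian_submatrix_equiv (blockEquiv s (nsz n)), submatrix_sigmaToeplitz_entrySymbol]
    exact hA n
  have hG := ae_isHermitian_of_isHermitian_sigmaToeplitz hGi
    (fun k => tendsto_atTop_of_tendsto_div hT (div_pos (mod_cast hmj k.1) (mod_cast hm))
      (hratio k.1)) hHerm
  have hszego := tendsto_eigSum_sigmaToeplitz (G := entrySymbol f) (mk := fun k => mj k.1)
    (ns := fun n k => nsz n k.1) (c := (m : ℝ)⁻¹) hF hFc hG hGi hT (by positivity)
    (fun k => hmj k.1) fun k => hratio k.1
  have hcard (n : ℕ) : ((n * s : ℕ) : ℂ)⁻¹ = (s : ℂ)⁻¹ * (n : ℂ)⁻¹ := by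
    rw [Nat.cast_mul, _root_.mul_inv_rev]
  have hlim := hszego.const_mul (s : ℂ)⁻¹
  simp only [Complex.ofReal_inv, Complex.ofReal_natCast] at hlim
  simp only [inv_volume_mul_setIntegral, card_blockIndex, hmsum, eigSum_blockMat,
    eigSum_generalSymbol, hcard, mul_assoc]
  rw [setAverage_const_mul, setAverage_const_mul]
  exact hlim

end BlockMatrixDistribution

/-- main distribution theorem, rational case: if the block sizes
satisfy `n_i/n → c_i = m_i/m ∈ (0,1)` with `m_1 + ⋯ + m_ν = m` and `n → ∞`, then
`{A_n}_n ∼_σ F` with `F = (E_{j,k})_{j,k=1}^ν`, and `{A_n}_n ∼_λ F` when every `A_n`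
is Hermitian. -/
theorem general_rational_distribution
    (ν s t m : ℕ) (hν : 2 ≤ ν) (hs : 0 < s) (ht : 0 < t) (hm : 0 < m)
    (mj : Fin ν → ℕ) (hmj : ∀ j, 0 < mj j) (hmsum : ∑ j, mj j = m)
    (f : Fin ν → Fin ν → ℝ → Matrix (Fin s) (Fin t) ℂ)
    (hf : ∀ i j a b, IntervalIntegrable (fun θ => f i j θ a b) volume (-π) π)
    (nsz : ℕ → Fin ν → ℕ)
    (htot : Tendsto (fun n => ∑ i, nsz n i) atTop atTop)
    (hratio : ∀ j, Tendsto (fun n => (nsz n j : ℝ) / ((∑ i, nsz n i : ℕ) : ℝ))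
      atTop (𝓝 ((mj j : ℝ) / (m : ℝ)))) :
    DistributedSV (Set.Icc (-π) π) (generalSymbol ν s t f mj)
      (fun n => blockMat ν s t f (nsz n)) ∧
    (∀ hst : s = t,
      (∀ n, ((blockMat ν s t f (nsz n)).submatrix id
        (sigCast ν s t (nsz n) hst)).IsHermitian) →
      DistributedEig (Set.Icc (-π) π)
        (fun θ => (generalSymbol ν s t f mj θ).submatrix id (sigCast ν s t mj hst))
        (fun n => (blockMat ν s t f (nsz n)).submatrix id
          (sigCast ν s t (nsz n) hst))) := by
  refine ⟨distributedSV_blockMat hm hmj hmsum hf htot hratio, ?_⟩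
  rintro rfl hA
  exact distributedEig_blockMat hm hmj hmsum hf htot hratio hA

end
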